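/- arXiv:1703.02654 — 3 statements merged into one kernel-verified Lean document; each statement's English description precedes it below -/
import Mathlib

section
/- Let n ≥ 4 be an integer and let G be the grid P_n □ P_4. Then the strong convexity spectrum of G equals S_SC(G) = {k ∈ ℤ : 1 ≤ k ≤ 4n−4} \ {2, 3, 5}. -/
/-!  Common definitions: oriented graphs, geodesic convexity, convexity number,
strong convexity spectrum, and grid graphs. -/

variable {V : Type*}

/-- A directed walk of length `k` from `u` to `v` along the arc relation `A`,
encoded by the function `f` listing its vertices. -/
def IsDirWalk (A : V → V → Prop) (k : ℕ) (f : ℕ → V) (u v : V) : Prop :=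
  f 0 = u ∧ f k = v ∧ ∀ i, i < k → A (f i) (f (i + 1))

/-- There is a directed walk from `u` to `v`. -/
def DirReachable (A : V → V → Prop) (u v : V) : Prop :=
  ∃ k f, IsDirWalk A k f u v

/-- A digraph (given by its arc relation) is strongly connected. -/
def StrongConnected (A : V → V → Prop) : Prop :=
  ∀ u v : V, DirReachable A u v

/-- A `uv`-geodesic: a directed walk from `u` to `v` of minimum possible length
(such a walk is automatically a directed path). -/
def IsGeodesic (A : V → V → Prop) (k : ℕ) (f : ℕ → V) (u v : V) : Prop :=
  IsDirWalk A k f u v ∧ ∀ k' f', IsDirWalk A k' f' u v → k ≤ k'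

/-- A nonempty vertex set `C` is convex if every vertex lying on a geodesic
between two vertices of `C` (in either direction) belongs to `C`. -/
def DConvex (A : V → V → Prop) (C : Set V) : Prop :=
  C.Nonempty ∧ ∀ u ∈ C, ∀ v ∈ C, ∀ k f, IsGeodesic A k f u v → ∀ i ≤ k, f i ∈ C

/-- `A` is an orientation of the simple graph `G`: every arc is along an edge,
every edge gets an arc, and no edge gets both directions. -/
def IsOrientation (G : SimpleGraph V) (A : V → V → Prop) : Prop :=
  (∀ x y, A x y → G.Adj x y) ∧ (∀ x y, G.Adj x y → A x y ∨ A y x) ∧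
    (∀ x y, A x y → ¬ A y x)

/-- The convexity number of a digraph: the maximum cardinality of a proper convex set. -/
noncomputable def convexityNumber [Fintype V] (A : V → V → Prop) : ℕ :=
  sSup {k | ∃ C : Set V, DConvex A C ∧ C ≠ Set.univ ∧ C.ncard = k}

/-- The strong convexity spectrum of a graph: the set of convexity numbers of
its strongly connected orientations. -/
def strongConvexitySpectrum [Fintype V] (G : SimpleGraph V) : Set ℕ :=
  {k | ∃ A : V → V → Prop, IsOrientation G A ∧ StrongConnected A ∧ convexityNumber A = k}

/-- The grid graph `P_n □ P_m`. -/
def gridGraph (n m : ℕ) : SimpleGraph (Fin n × Fin m) :=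
  (SimpleGraph.pathGraph n).boxProd (SimpleGraph.pathGraph m)

/-!
In a convex set with at least two vertices every vertex has an in-neighbour and an out-neighbour,
hence two neighbours, inside the set. Two vertices of a grid have at most two common neighbours, so
if the set has only two vertices of one colour of the checkerboard, then it has only two of the
other colour as well. This excludes 2, 3 and 5.

A walk that leaves a proper convex set and comes back to it is longer than the grid distance of its
ends. Hence no arc leaving the set ends where an arc entering it starts. If there are two vertices
of both kinds, then at least four vertices are missing. Otherwise, up to reversal of all arcs, every
arc leaving the set ends at the same vertex; if at most three vertices were missing, the lengths of
the walks through them would force some of them to be corners of the grid, too close to each other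
or too close to the boundary.

Conversely, orientations of grids with few rows, found by a computer search, are extended row by
row. A new row is folded back over the row to which it is attached, and its edges are oriented like
their images, so that the folding is a retraction of digraphs and preserves distances. If the
squares at the end of the grid are directed cycles, the new row can be added to the greatest proper
convex set when this set contains the whole end row, and it stays outside when the set has no edge
with an end in the end row.
-/

theorem exists_and_not_succ_of_le {p : ℕ → Prop} {i k : ℕ} (hik : i ≤ k) (hi : p i) (hk : ¬ p k) :
    ∃ j, i ≤ j ∧ j < k ∧ p j ∧ ¬ p (j + 1) := by
  by_contra! h
  exact hk (Nat.le_induction (P := fun j _ => j ≤ k → p j) (fun _ => hi)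
    (fun j hij ih hjk => h j hij hjk (ih (by omega))) k hik le_rfl)

section Walks

variable {A : V → V → Prop} {C L S : Set V} {f : ℕ → V} {i j k l : ℕ} {u v w : V}

/-- Existence of a directed walk of length `k` from `u` to `v`. -/
def HasDirWalk (A : V → V → Prop) (k : ℕ) (u v : V) : Prop :=
  ∃ f, IsDirWalk A k f u v

theorem hasDirWalk_zero : HasDirWalk A 0 u v ↔ u = v :=
  ⟨fun ⟨_, h₀, h₁, _⟩ => h₀.symm.trans h₁, fun h => ⟨fun _ => u, rfl, h, by simp⟩⟩

theorem HasDirWalk.of_arc (h : A u v) : HasDirWalk A 1 u v := by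
  refine ⟨fun i => if i = 0 then u else v, by simp, by simp, fun i hi => ?_⟩
  obtain rfl : i = 0 := by omega
  simpa using h

theorem IsDirWalk.segment (h : IsDirWalk A k f u v) (hij : i ≤ j) (hjk : j ≤ k) :
    IsDirWalk A (j - i) (fun t => f (i + t)) (f i) (f j) :=
  ⟨rfl, congrArg f (by omega), fun t ht => h.2.2 (i + t) (by omega)⟩

theorem IsDirWalk.hasDirWalk_segment (h : IsDirWalk A k f u v) (hij : i ≤ j) (hjk : j ≤ k) :
    HasDirWalk A (j - i) (f i) (f j) :=
  ⟨_, h.segment hij hjk⟩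

theorem IsDirWalk.append {g : ℕ → V} (hf : IsDirWalk A k f u v) (hg : IsDirWalk A l g v w) :
    IsDirWalk A (k + l) (fun t => if t ≤ k then f t else g (t - k)) u w := by
  obtain ⟨hf₀, hfk, hf⟩ := hf
  obtain ⟨hg₀, hgl, hg⟩ := hg
  refine ⟨by simpa using hf₀, ?_, fun t ht => ?_⟩
  · rcases Nat.eq_zero_or_pos l with rfl | hl
    · simp [hfk, ← hg₀, hgl]
    · simpa [show ¬ k + l ≤ k by omega] using hgl
  · rcases lt_trichotomy t k with htk | rfl | htk
    · simpa [show t ≤ k by omega, show t + 1 ≤ k by omega] using hf t htk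
    · simpa [hfk, ← hg₀] using hg 0 (by omega)
    · have := hg (t - k) (by omega)
      rw [show t - k + 1 = t + 1 - k by omega] at this
      simpa [show ¬ t ≤ k by omega, show ¬ t + 1 ≤ k by omega] using this

theorem HasDirWalk.append (hf : HasDirWalk A k u v) (hg : HasDirWalk A l v w) :
    HasDirWalk A (k + l) u w :=
  let ⟨_, hf⟩ := hf
  let ⟨_, hg⟩ := hg
  ⟨_, hf.append hg⟩

theorem hasDirWalk_succ : HasDirWalk A (k + 1) u v ↔ ∃ w, A u w ∧ HasDirWalk A k w v := by
  constructor
  · rintro ⟨f, hf⟩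
    refine ⟨f 1, hf.1 ▸ hf.2.2 0 k.succ_pos, ?_⟩
    simpa [hf.2.1] using hf.hasDirWalk_segment (i := 1) (by omega) le_rfl
  · rintro ⟨w, huw, hw⟩
    simpa [add_comm] using (HasDirWalk.of_arc huw).append hw

theorem hasDirWalk_one : HasDirWalk A 1 u v ↔ A u v := by
  simp [hasDirWalk_succ (k := 0), hasDirWalk_zero]

theorem DirReachable.append (huv : DirReachable A u v) (hvw : DirReachable A v w) :
    DirReachable A u w :=
  let ⟨_, huv⟩ := huv
  let ⟨_, hvw⟩ := hvw
  ⟨_, HasDirWalk.append huv hvw⟩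

theorem DirReachable.of_arc (h : A u v) : DirReachable A u v :=
  ⟨1, HasDirWalk.of_arc h⟩

theorem hasDirWalk_flip : HasDirWalk (flip A) k v u ↔ HasDirWalk A k u v := by
  suffices h : ∀ {A : V → V → Prop} {u v}, HasDirWalk A k u v → HasDirWalk (flip A) k v u from
    ⟨h, h⟩
  rintro A u v ⟨f, h₀, hk, hf⟩
  refine ⟨fun t => f (k - t), by simpa, by simpa, fun t ht => ?_⟩
  have := hf (k - (t + 1)) (by omega)
  rwa [show k - (t + 1) + 1 = k - t by omega] at this

theorem StrongConnected.flip (h : StrongConnected A) : StrongConnected (flip A) :=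
  fun u v => let ⟨k, hk⟩ := h v u; ⟨k, hasDirWalk_flip.2 hk⟩

theorem IsOrientation.flip {G : SimpleGraph V} (h : IsOrientation G A) :
    IsOrientation G (flip A) :=
  ⟨fun x y hyx => (h.1 y x hyx).symm, fun x y hxy => (h.2.1 x y hxy).symm,
    fun x y hyx hxy => h.2.2 x y hxy hyx⟩

theorem IsGeodesic.segment (h : IsGeodesic A k f u v) (hij : i ≤ j) (hjk : j ≤ k) :
    IsGeodesic A (j - i) (fun t => f (i + t)) (f i) (f j) := by
  refine ⟨h.1.segment hij hjk, fun l g hg => ?_⟩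
  have hi : HasDirWalk A (i - 0) u (f i) := h.1.1 ▸ h.1.hasDirWalk_segment i.zero_le (by omega)
  have hj : HasDirWalk A (k - j) (f j) v := h.1.2.1 ▸ h.1.hasDirWalk_segment hjk le_rfl
  obtain ⟨_, hw⟩ := (hi.append ⟨g, hg⟩).append hj
  have := h.2 _ _ hw
  omega

theorem StrongConnected.exists_isGeodesic (h : StrongConnected A) (u v : V) :
    ∃ k f, IsGeodesic A k f u v := by
  classical
  have huv : ∃ k, HasDirWalk A k u v := h u v
  obtain ⟨f, hf⟩ := Nat.find_spec huv
  exact ⟨_, f, hf, fun k' f' h' => Nat.find_min' huv ⟨f', h'⟩⟩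

theorem DConvex.mem_of_hasDirWalk (hC : DConvex A C) (hu : u ∈ C) (hv : v ∈ C)
    (huw : HasDirWalk A i u w) (hwv : HasDirWalk A j w v)
    (hmin : ∀ k, HasDirWalk A k u v → i + j ≤ k) : w ∈ C := by
  obtain ⟨f, hf⟩ := huw
  obtain ⟨g, hg⟩ := hwv
  have := hC.2 u hu v hv _ _ ⟨hf.append hg, fun k' f' h' => hmin k' ⟨f', h'⟩⟩ i (by omega)
  simpa [hf.2.1] using this

theorem DConvex.flip (hC : DConvex A C) : DConvex (flip A) C := by
  refine ⟨hC.1, fun u hu v hv k f hf i hi => ?_⟩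
  refine hC.mem_of_hasDirWalk hv hu
    (hasDirWalk_flip.1 (hf.1.2.1 ▸ hf.1.hasDirWalk_segment hi le_rfl))
    (hasDirWalk_flip.1 (hf.1.1 ▸ hf.1.hasDirWalk_segment i.zero_le hi)) fun l hl => ?_
  obtain ⟨g, hg⟩ := hasDirWalk_flip.2 hl
  have := hf.2 _ _ hg
  omega

/-- A geodesic from `L` to `S \ L` stays in `S`, so one of its arcs leaves `L` inside `S`. -/
theorem DConvex.exists_arc_leaving (hS : DConvex A S) (hA : StrongConnected A)
    (hL : L.Nonempty) (hLS : L ⊂ S) : ∃ x ∈ L, ∃ y ∈ S \ L, A x y := by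
  obtain ⟨u, hu⟩ := hL
  obtain ⟨v, hvS, hvL⟩ := Set.exists_of_ssubset hLS
  obtain ⟨k, f, hf⟩ := hA.exists_isGeodesic u v
  obtain ⟨i, -, hik, hi, hi'⟩ := exists_and_not_succ_of_le (p := fun i => f i ∈ L) k.zero_le
    (hf.1.1 ▸ hu) (hf.1.2.1 ▸ hvL)
  exact ⟨f i, hi, f (i + 1), ⟨hS.2 u (hLS.1 hu) v hvS k f hf _ hik, hi'⟩, hf.1.2.2 i hik⟩

theorem StrongConnected.exists_arc_leaving (hA : StrongConnected A) (hL : L.Nonempty)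
    (hL' : Lᶜ.Nonempty) : ∃ x ∈ L, ∃ y ∉ L, A x y := by
  have huniv : DConvex A Set.univ := ⟨hL.mono L.subset_univ, by simp⟩
  have hss : L ⊂ Set.univ := Set.ssubset_univ_iff.2 (Set.nonempty_compl.1 hL')
  simpa using huniv.exists_arc_leaving hA hL hss

theorem DConvex.exists_arc_from (hS : DConvex A S) (hA : StrongConnected A)
    (hnt : S.Nontrivial) (hu : u ∈ S) : ∃ v ∈ S, A u v := by
  have hss : {u} ⊂ S := (Set.ssubset_iff_of_subset (Set.singleton_subset_iff.2 hu)).2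
    (hnt.exists_ne u)
  obtain ⟨_, rfl, v, hv, huv⟩ := hS.exists_arc_leaving hA (Set.singleton_nonempty u) hss
  exact ⟨v, hv.1, huv⟩

theorem dConvex_singleton (u : V) : DConvex A {u} := by
  refine ⟨Set.singleton_nonempty u, ?_⟩
  rintro _ rfl _ rfl k f hf i hi
  obtain ⟨g, hg⟩ := (hasDirWalk_zero (A := A)).2 (rfl : f 0 = f 0)
  obtain rfl : k = 0 := by simpa [hf.1.1] using hf.2 0 g (hf.1.1 ▸ hg)
  obtain rfl : i = 0 := by omega
  exact hf.1.1

end Walks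

section ConvexityNumber

variable {A : V → V → Prop} {C S : Set V}

/-- `C` is a proper convex set which contains every other proper convex set with at least two
vertices. -/
structure IsGreatestProperConvex (A : V → V → Prop) (C : Set V) : Prop where
  dConvex : DConvex A C
  ne_univ : C ≠ Set.univ
  subset : ∀ S, DConvex A S → S ≠ Set.univ → S.Nontrivial → S ⊆ C

theorem convexityNumber_eq_ncard [Fintype V] (hC : DConvex A C) (hne : C ≠ Set.univ)
    (hle : ∀ S, DConvex A S → S ≠ Set.univ → S.Nontrivial → S.ncard ≤ C.ncard) :
    convexityNumber A = C.ncard := by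
  refine IsGreatest.csSup_eq (a := C.ncard) ⟨⟨C, hC, hne, rfl⟩, ?_⟩
  rintro _ ⟨S, hS, hSne, rfl⟩
  rcases S.subsingleton_or_nontrivial with hsub | hnt
  · exact (Set.ncard_le_one_iff_subsingleton.2 hsub).trans ((Set.ncard_pos (Set.toFinite C)).2 hC.1)
  · exact hle S hS hSne hnt

theorem IsGreatestProperConvex.convexityNumber_eq [Fintype V] (hC : IsGreatestProperConvex A C) :
    convexityNumber A = C.ncard :=
  convexityNumber_eq_ncard hC.dConvex hC.ne_univ fun S hS hne hnt =>
    Set.ncard_le_ncard (hC.subset S hS hne hnt)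

theorem exists_dConvex_ncard_eq_convexityNumber [Fintype V] [Nontrivial V] (A : V → V → Prop) :
    ∃ C : Set V, DConvex A C ∧ C ≠ Set.univ ∧ C.ncard = convexityNumber A := by
  obtain ⟨u, v, huv⟩ := exists_pair_ne V
  refine Nat.sSup_mem (s := {k | ∃ C : Set V, DConvex A C ∧ C ≠ Set.univ ∧ C.ncard = k})
    ⟨_, {u}, dConvex_singleton u, fun h => ?_, rfl⟩ ⟨Fintype.card V, ?_⟩
  · exact huv.symm (h ▸ Set.mem_univ v : v ∈ ({u} : Set V))
  · rintro _ ⟨C, -, -, rfl⟩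
    exact Nat.card_eq_fintype_card (α := V) ▸ Set.ncard_le_card C

end ConvexityNumber

section Retraction

variable {W : Type*} {A : V → V → Prop} {B : W → W → Prop} {ι : V → W} {ρ : W → V}
  {C : Set V} {S : Set W} {f : ℕ → W} {i k : ℕ} {u v : V}

theorem IsDirWalk.map {φ : V → W} {f : ℕ → V} (hφ : ∀ x y, A x y → B (φ x) (φ y))
    (h : IsDirWalk A k f u v) : IsDirWalk B k (φ ∘ f) (φ u) (φ v) :=
  ⟨congrArg φ h.1, congrArg φ h.2.1, fun i hi => hφ _ _ (h.2.2 i hi)⟩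

/-- A retraction `ρ` of the digraph `B` onto an embedded copy `ι` of the digraph `A`. Distances
between vertices of the copy are the same in `A` and in `B`. -/
structure DirRetraction (A : V → V → Prop) (B : W → W → Prop) (ι : V → W) (ρ : W → V) :
    Prop where
  leftInverse : Function.LeftInverse ρ ι
  map_emb : ∀ u v, A u v → B (ι u) (ι v)
  map_retr : ∀ x y, B x y → A (ρ x) (ρ y)

namespace DirRetraction

theorem isGeodesic_emb (h : DirRetraction A B ι ρ) {f : ℕ → V} (hf : IsGeodesic A k f u v) :
    IsGeodesic B k (ι ∘ f) (ι u) (ι v) := by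
  refine ⟨hf.1.map h.map_emb, fun l g hg => hf.2 l (ρ ∘ g) ?_⟩
  simpa only [h.leftInverse _] using hg.map h.map_retr

theorem isGeodesic_retr (h : DirRetraction A B ι ρ) (hf : IsGeodesic B k f (ι u) (ι v)) :
    IsGeodesic A k (ρ ∘ f) u v := by
  refine ⟨?_, fun l g hg => hf.2 l (ι ∘ g) (hg.map h.map_emb)⟩
  simpa only [h.leftInverse _] using hf.1.map h.map_retr

theorem retr_mem (h : DirRetraction A B ι ρ) (hC : DConvex A C) (hu : u ∈ C) (hv : v ∈ C)
    (hf : IsGeodesic B k f (ι u) (ι v)) (hi : i ≤ k) : ρ (f i) ∈ C :=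
  hC.2 u hu v hv k _ (h.isGeodesic_retr hf) i hi

theorem dConvex_preimage (h : DirRetraction A B ι ρ) (hS : DConvex B S)
    (hne : (ι ⁻¹' S).Nonempty) : DConvex A (ι ⁻¹' S) :=
  ⟨hne, fun _ hu _ hv k _ hf i hi => hS.2 _ hu _ hv k _ (h.isGeodesic_emb hf) i hi⟩

theorem strongConnected (h : DirRetraction A B ι ρ) (hA : StrongConnected A)
    (hto : ∀ x, ∃ v, DirReachable B x (ι v)) (hfrom : ∀ x, ∃ v, DirReachable B (ι v) x) :
    StrongConnected B := by
  intro x y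
  obtain ⟨u, hu⟩ := hto x
  obtain ⟨v, hv⟩ := hfrom y
  obtain ⟨k, f, hf⟩ := hA u v
  exact (hu.append ⟨k, _, hf.map h.map_emb⟩).append hv

/-- A geodesic cannot leave the copy of `C`: it would do so along an arc whose retraction leaves
`C`, while it retracts to a geodesic of `A` with ends in `C`. -/
theorem dConvex_image (h : DirRetraction A B ι ρ) (hC : DConvex A C)
    (hexit : ∀ u ∈ C, ∀ x ∉ Set.range ι, B (ι u) x → ρ x ∉ C) : DConvex B (ι '' C) := by
  refine ⟨hC.1.image ι, ?_⟩
  rintro _ ⟨u, hu, rfl⟩ _ ⟨v, hv, rfl⟩ k f hf i hi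
  induction i with
  | zero => exact hf.1.1 ▸ Set.mem_image_of_mem ι hu
  | succ i ih =>
    obtain ⟨w, hw, hwf⟩ := ih (by omega)
    have hmem := h.retr_mem hC hu hv hf hi
    obtain ⟨y, hy⟩ : f (i + 1) ∈ Set.range ι := by
      by_contra hout
      exact hexit w hw _ hout (hwf ▸ hf.1.2.2 i hi) hmem
    exact ⟨y, by rwa [← hy, h.leftInverse] at hmem, hy⟩

/-- A geodesic with ends in the set can only leave and reenter it through the copy of `C`, and
between these two moments it retracts to a geodesic of `A` with ends in `C`. -/
theorem dConvex_image_union_compl_range (h : DirRetraction A B ι ρ) (hC : DConvex A C)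
    (hattach : ∀ u, ∀ x ∉ Set.range ι, B (ι u) x ∨ B x (ι u) → u ∈ C) :
    DConvex B (ι '' C ∪ (Set.range ι)ᶜ) := by
  refine ⟨(hC.1.image ι).inl, fun x hx y hy k f hf i hi => ?_⟩
  by_contra hout
  set p : ℕ → Prop := fun j => f j ∈ ι '' C ∪ (Set.range ι)ᶜ
  have key : ∀ a b, (B (f a) (f b) ∨ B (f b) (f a)) → p a → ¬ p b → ∃ w ∈ C, ι w = f a := by
    intro a b hab ha hb
    rcases ha with ha | ha
    · exact ha
    · obtain ⟨w, hw⟩ : f b ∈ Set.range ι := by_contra fun h' => hb (.inr h')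
      exact absurd (.inl ⟨w, hattach w _ ha (by rwa [hw, or_comm]), hw⟩) hb
  obtain ⟨a, -, hai, ha, ha'⟩ := exists_and_not_succ_of_le (p := p) i.zero_le
    (by simpa only [p, hf.1.1] using hx) hout
  obtain ⟨b, hib, hbk, hb, hb'⟩ := exists_and_not_succ_of_le (p := fun j => ¬ p j) hi hout
    (not_not.2 (by simpa only [p, hf.1.2.1] using hy))
  obtain ⟨u, hu, hua⟩ := key a (a + 1) (.inl (hf.1.2.2 a (by omega))) ha ha'
  obtain ⟨v, hv, hvb⟩ := key (b + 1) b (.inr (hf.1.2.2 b hbk)) (not_not.1 hb') hb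
  have hseg := hf.segment (i := a) (j := b + 1) (by omega) hbk
  rw [← hua, ← hvb] at hseg
  have hmem := h.retr_mem hC hu hv hseg (i := i - a) (by omega)
  rw [show a + (i - a) = i by omega] at hmem
  obtain ⟨w, hw⟩ : f i ∈ Set.range ι := by_contra fun h' => hout (.inr h')
  exact hout (.inl ⟨w, by rwa [← hw, h.leftInverse] at hmem, hw⟩)

end DirRetraction

end Retraction

section DirectedSquares

variable {G : SimpleGraph V} {A : V → V → Prop} {S : Set V} {a b c d u v : V} {k : ℕ}

theorem IsOrientation.even_iff_of_hasDirWalk (hA : IsOrientation G A) (κ : G.Coloring Bool)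
    (h : HasDirWalk A k u v) : Even k ↔ κ u = κ v := by
  induction k generalizing u with
  | zero => simp [hasDirWalk_zero.1 h]
  | succ k ih =>
    obtain ⟨w, huw, hwv⟩ := hasDirWalk_succ.1 h
    have hne : κ w = !κ u := Bool.eq_not.2 (κ.valid (hA.1 _ _ huw)).symm
    rw [Nat.even_add_one, ih hwv, hne]
    simp

theorem dirReachable_of_directed_square (hbc : A b c) (hcd : A c d) (hda : A d a) :
    DirReachable A b a :=
  ((DirReachable.of_arc hbc).append (.of_arc hcd)).append (.of_arc hda)

theorem DConvex.mem_of_directed_square (hA : IsOrientation G A) (κ : G.Coloring Bool)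
    (hS : DConvex A S) (hab : A a b) (hbc : A b c) (hcd : A c d) (hda : A d a)
    (ha : a ∈ S) (hb : b ∈ S) : c ∈ S ∧ d ∈ S := by
  have hbc' := HasDirWalk.of_arc hbc
  have hcd' := HasDirWalk.of_arc hcd
  have hda' := HasDirWalk.of_arc hda
  have hmin : ∀ k, HasDirWalk A k b a → 3 ≤ k := by
    intro k hk
    have hodd : ¬ Even k := fun h =>
      κ.valid (hA.1 _ _ hab) ((hA.even_iff_of_hasDirWalk κ hk).1 h).symm
    have hne : k ≠ 1 := by
      rintro rfl
      exact hA.2.2 _ _ hab (hasDirWalk_one.1 hk)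
    grind
  exact ⟨hS.mem_of_hasDirWalk hb ha hbc' (hcd'.append hda') hmin,
    hS.mem_of_hasDirWalk hb ha (hbc'.append hcd') hda' hmin⟩

end DirectedSquares

section CyclicFaces

variable {α γ : Type*} {P : SimpleGraph α} {Q : SimpleGraph γ}
  {A : α × γ → α × γ → Prop} {S : Set (α × γ)} {i i' : α} {j j' : γ}

/-- Every square between the rows `i` and `i'` of a digraph on `α × γ` is a directed cycle. -/
def CyclicFaces (A : α × γ → α × γ → Prop) (i i' : α) : Prop :=
  ∀ j j', A (i, j) (i, j') → A (i, j') (i', j') ∧ A (i', j') (i', j) ∧ A (i', j) (i, j)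

theorem adj_row_of_arc (hA : IsOrientation (P □ Q) A) (h : A (i, j) (i, j')) : Q.Adj j j' := by
  simpa using hA.1 _ _ h

theorem arc_or_arc_of_adj (hA : IsOrientation (P □ Q) A) (i : α) (h : Q.Adj j j') :
    A (i, j) (i, j') ∨ A (i, j') (i, j) :=
  hA.2.1 _ _ (by simpa using h)

namespace CyclicFaces

theorem symm (hA : IsOrientation (P □ Q) A) (h : CyclicFaces A i i') : CyclicFaces A i' i := by
  intro j j' hjj'
  rcases arc_or_arc_of_adj hA i (adj_row_of_arc hA hjj') with h' | h'
  · exact absurd (h _ _ h').2.1 (hA.2.2 _ _ hjj')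
  · obtain ⟨h₁, -, h₃⟩ := h _ _ h'
    exact ⟨h₃, h', h₁⟩

theorem dirReachable (hA : IsOrientation (P □ Q) A) (h : CyclicFaces A i i') (hj : Q.Adj j j') :
    DirReachable A (i, j) (i', j) := by
  rcases arc_or_arc_of_adj hA i hj with h' | h'
  · obtain ⟨h₁, h₂, -⟩ := h _ _ h'
    exact dirReachable_of_directed_square h' h₁ h₂
  · exact .of_arc (h _ _ h').1

variable (hA : IsOrientation (P □ Q) A) (κ : (P □ Q).Coloring Bool) (h : CyclicFaces A i i')
  (hS : DConvex A S) (hj : Q.Adj j j')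
include hA κ h hS hj

theorem mem_of_row_mem (hjS : (i, j) ∈ S) (hjS' : (i, j') ∈ S) : (i', j) ∈ S := by
  rcases arc_or_arc_of_adj hA i hj with h' | h'
  · obtain ⟨h₁, h₂, h₃⟩ := h _ _ h'
    exact (hS.mem_of_directed_square hA κ h' h₁ h₂ h₃ hjS hjS').2
  · obtain ⟨h₁, h₂, h₃⟩ := h _ _ h'
    exact (hS.mem_of_directed_square hA κ h' h₁ h₂ h₃ hjS' hjS).1

theorem mem_of_column_mem (hjS : (i, j) ∈ S) (hjS' : (i', j) ∈ S) : (i', j') ∈ S := by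
  rcases arc_or_arc_of_adj hA i hj with h' | h'
  · obtain ⟨h₁, h₂, h₃⟩ := h _ _ h'
    exact (hS.mem_of_directed_square hA κ h₃ h' h₁ h₂ hjS' hjS).2
  · obtain ⟨h₁, h₂, h₃⟩ := h _ _ h'
    exact (hS.mem_of_directed_square hA κ h₁ h₂ h₃ h' hjS hjS').1

end CyclicFaces

end CyclicFaces

section LeafFolding

variable {α β γ : Type*} {P : SimpleGraph α} {P' : SimpleGraph β} {Q : SimpleGraph γ}

/-- The graph `P'` is `P` with a new vertex `leaf` attached to the single vertex `stem`, and `fold`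
folds the new edge back onto an edge of `P`. -/
structure LeafFolding (P : SimpleGraph α) (P' : SimpleGraph β) where
  emb : P →g P'
  fold : P' →g P
  leaf : β
  stem : α
  fold_emb : ∀ i, fold (emb i) = i
  emb_ne_leaf : ∀ i, emb i ≠ leaf
  exists_emb_eq : ∀ x, x ≠ leaf → ∃ i, emb i = x
  adj_leaf_iff : ∀ i, P'.Adj (emb i) leaf ↔ i = stem

/-- The rows `i`, `i'` of a digraph with convex set `C` are such that a new row attached to `i` can
be added to `C`: the folded faces are directed cycles and the whole row `i` is in `C`. -/
def IsGrowableEnd (A : α × γ → α × γ → Prop) (C : Set (α × γ)) (i i' : α) : Prop :=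
  CyclicFaces A i i' ∧ ∀ j, (i, j) ∈ C

/-- The rows `i`, `i'` of a digraph with convex set `C` are such that a new row attached to `i` can
be kept out of `C`: the folded faces are directed cycles, and no edge with an end in row `i` and
the other end in row `i` or `i'` has both ends in `C`. -/
def IsSealedEnd (A : α × γ → α × γ → Prop) (C : Set (α × γ)) (i i' : α) : Prop :=
  CyclicFaces A i i' ∧ (∀ j, (i, j) ∈ C → (i', j) ∉ C) ∧
    ∀ j j', A (i, j) (i, j') → (i, j) ∈ C → (i, j') ∉ C

namespace LeafFolding

variable (F : LeafFolding P P')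

/-- The copy of the old rows in the product with one more row. -/
def embProd (x : α × γ) : β × γ := (F.emb x.1, x.2)

/-- Folding of the new row onto the neighbouring row of its stem. -/
def foldProd (x : β × γ) : α × γ := (F.fold x.1, x.2)

/-- The orientation of `P' □ Q` whose arcs are the edges folding to arcs of `A`. -/
def unfoldArcs (Q : SimpleGraph γ) (A : α × γ → α × γ → Prop) (x y : β × γ) : Prop :=
  (P' □ Q).Adj x y ∧ A (F.foldProd x) (F.foldProd y)

variable {F} {A : α × γ → α × γ → Prop} {C : Set (α × γ)} {D S : Set (β × γ)} {i i' : α}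

theorem foldProd_embProd (x : α × γ) : F.foldProd (F.embProd x) = x := by
  simp [foldProd, embProd, F.fold_emb]

theorem embProd_injective : Function.Injective (F.embProd (γ := γ)) :=
  Function.LeftInverse.injective foldProd_embProd

theorem notMem_range_embProd {x : β × γ} : x ∉ Set.range F.embProd ↔ x.1 = F.leaf := by
  refine ⟨fun h => by_contra fun hx => ?_, ?_⟩
  · obtain ⟨i, hi⟩ := F.exists_emb_eq _ hx
    exact h ⟨(i, x.2), Prod.ext hi rfl⟩
  · rintro h ⟨y, rfl⟩
    exact F.emb_ne_leaf _ h

theorem preimage_image_union_compl_range (C : Set (α × γ)) :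
    F.embProd ⁻¹' (F.embProd '' C ∪ (Set.range F.embProd)ᶜ) = C := by
  rw [Set.preimage_union, Set.preimage_image_eq C embProd_injective, Set.preimage_compl,
    Set.preimage_range, Set.compl_univ, Set.union_empty]

theorem ncard_image_union_compl_range [Finite α] [Finite β] [Fintype γ] (C : Set (α × γ)) :
    (F.embProd '' C ∪ (Set.range F.embProd)ᶜ).ncard = C.ncard + Fintype.card γ := by
  have hcompl : (Set.range F.embProd)ᶜ = Prod.mk F.leaf '' (Set.univ : Set γ) := by
    ext x
    rw [Set.mem_compl_iff, notMem_range_embProd]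
    simp [Prod.ext_iff, eq_comm]
  rw [Set.ncard_union_eq (Set.disjoint_compl_right_iff_subset.2 (Set.image_subset_range _ _)),
    Set.ncard_image_of_injective C embProd_injective, hcompl,
    Set.ncard_image_of_injective _ (Prod.mk_right_injective _), Set.ncard_univ,
    Nat.card_eq_fintype_card]

theorem adj_embProd {x y : α × γ} (h : (P □ Q).Adj x y) :
    (P' □ Q).Adj (F.embProd x) (F.embProd y) := by
  rw [SimpleGraph.boxProd_adj] at h ⊢
  exact h.imp (.imp_left F.emb.map_adj) (.imp_right (congrArg F.emb))

theorem adj_foldProd {x y : β × γ} (h : (P' □ Q).Adj x y) :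
    (P □ Q).Adj (F.foldProd x) (F.foldProd y) := by
  rw [SimpleGraph.boxProd_adj] at h ⊢
  exact h.imp (.imp_left F.fold.map_adj) (.imp_right (congrArg F.fold))

theorem eq_of_adj_embProd {x : β × γ} {u : α × γ} (hx : x ∉ Set.range F.embProd)
    (h : (P' □ Q).Adj (F.embProd u) x) : u = (F.stem, x.2) := by
  rw [notMem_range_embProd] at hx
  rw [SimpleGraph.boxProd_adj, hx] at h
  rcases h with ⟨h, h'⟩ | ⟨-, h⟩
  · exact Prod.ext ((F.adj_leaf_iff _).1 h) h'
  · exact absurd h (F.emb_ne_leaf _)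

theorem adj_stem_leaf (j : γ) : (P' □ Q).Adj (F.embProd (F.stem, j)) (F.leaf, j) := by
  simpa [embProd] using (F.adj_leaf_iff F.stem).2 rfl

section UnfoldArcs

variable (hA : IsOrientation (P □ Q) A)
include hA

theorem isOrientation_unfoldArcs : IsOrientation (P' □ Q) (F.unfoldArcs Q A) := by
  refine ⟨fun _ _ h => h.1, fun x y h => ?_, fun x y h h' => hA.2.2 _ _ h.2 h'.2⟩
  exact (hA.2.1 _ _ (adj_foldProd h)).imp (.intro h) (.intro h.symm)

theorem dirRetraction : DirRetraction A (F.unfoldArcs Q A) F.embProd F.foldProd where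
  leftInverse := foldProd_embProd
  map_emb u v h := ⟨adj_embProd (hA.1 _ _ h), by rwa [foldProd_embProd, foldProd_embProd]⟩
  map_retr _ _ h := h.2

theorem cyclicFaces_embProd (h : CyclicFaces A i i') :
    CyclicFaces (F.unfoldArcs Q A) (F.emb i) (F.emb i') := by
  have hmap := (dirRetraction (F := F) hA).map_emb
  intro j j' hjj'
  obtain ⟨h₁, h₂, h₃⟩ := h j j' (by simpa [foldProd, F.fold_emb] using hjj'.2)
  exact ⟨hmap _ _ h₁, hmap _ _ h₂, hmap _ _ h₃⟩

theorem cyclicFaces_leaf (h : CyclicFaces A F.stem (F.fold F.leaf)) :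
    CyclicFaces (F.unfoldArcs Q A) (F.emb F.stem) F.leaf := by
  intro j j' hjj'
  have hQ := adj_row_of_arc (isOrientation_unfoldArcs hA) hjj'
  have hfold : A (F.stem, j) (F.stem, j') := by simpa [foldProd, F.fold_emb] using hjj'.2
  obtain ⟨h₁, h₂, h₃⟩ := h j j' hfold
  have hrow : (P' □ Q).Adj (F.leaf, j') (F.leaf, j) := by simpa using hQ.symm
  refine ⟨⟨adj_stem_leaf j', ?_⟩, ⟨hrow, h₂⟩, ⟨(adj_stem_leaf j).symm, ?_⟩⟩
  · simpa [foldProd, F.fold_emb] using h₁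
  · simpa [foldProd, F.fold_emb] using h₃

theorem isGrowableEnd_leaf (h : CyclicFaces A F.stem (F.fold F.leaf))
    (hD : ∀ j, (F.leaf, j) ∈ D) :
    IsGrowableEnd (F.unfoldArcs Q A) D F.leaf (F.emb F.stem) :=
  ⟨CyclicFaces.symm (isOrientation_unfoldArcs hA) (cyclicFaces_leaf hA h), hD⟩

theorem isSealedEnd_leaf (h : CyclicFaces A F.stem (F.fold F.leaf))
    (hD : ∀ j, (F.leaf, j) ∉ D) :
    IsSealedEnd (F.unfoldArcs Q A) D F.leaf (F.emb F.stem) :=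
  ⟨CyclicFaces.symm (isOrientation_unfoldArcs hA) (cyclicFaces_leaf hA h),
    fun j hj => absurd hj (hD j), fun j _ _ hj => absurd hj (hD j)⟩

theorem isGrowableEnd_embProd (h : IsGrowableEnd A C i i') (hD : F.embProd ⁻¹' D = C) :
    IsGrowableEnd (F.unfoldArcs Q A) D (F.emb i) (F.emb i') := by
  subst hD
  exact ⟨cyclicFaces_embProd hA h.1, h.2⟩

theorem isSealedEnd_embProd (h : IsSealedEnd A C i i') (hD : F.embProd ⁻¹' D = C) :
    IsSealedEnd (F.unfoldArcs Q A) D (F.emb i) (F.emb i') := by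
  subst hD
  refine ⟨cyclicFaces_embProd hA h.1, h.2.1, fun j j' hjj' => h.2.2 j j' ?_⟩
  simpa [foldProd, F.fold_emb] using hjj'.2

variable (hQ : ∀ j, ∃ j', Q.Adj j j')
  (hF : CyclicFaces A F.stem (F.fold F.leaf))
include hQ hF

theorem strongConnected_unfoldArcs (hA' : StrongConnected A) :
    StrongConnected (F.unfoldArcs Q A) := by
  have hO := isOrientation_unfoldArcs (F := F) hA
  have hcyc := cyclicFaces_leaf hA hF
  refine (dirRetraction hA).strongConnected hA' ?_ ?_ <;> rintro ⟨x, j⟩ <;>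
    obtain ⟨j', hj⟩ := hQ j <;> by_cases hx : (x, j) ∈ Set.range F.embProd
  · obtain ⟨v, hv⟩ := hx
    exact ⟨v, 0, hasDirWalk_zero.2 hv.symm⟩
  · obtain rfl := notMem_range_embProd.1 hx
    exact ⟨(F.stem, j), (CyclicFaces.symm hO hcyc).dirReachable hO hj⟩
  · obtain ⟨v, hv⟩ := hx
    exact ⟨v, 0, hasDirWalk_zero.2 hv⟩
  · obtain rfl := notMem_range_embProd.1 hx
    exact ⟨(F.stem, j), hcyc.dirReachable hO hj⟩

variable (κ : (P' □ Q).Coloring Bool)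
include κ

theorem eq_univ_of_range_subset (hS : DConvex (F.unfoldArcs Q A) S)
    (hsub : Set.range F.embProd ⊆ S) : S = Set.univ := by
  refine Set.eq_univ_of_forall fun ⟨x, j⟩ => ?_
  by_cases hx : (x, j) ∈ Set.range F.embProd
  · exact hsub hx
  · obtain rfl := notMem_range_embProd.1 hx
    obtain ⟨j', hj⟩ := hQ j
    exact (cyclicFaces_leaf hA hF).mem_of_row_mem (isOrientation_unfoldArcs hA) κ hS hj
      (hsub ⟨(F.stem, j), rfl⟩) (hsub ⟨(F.stem, j'), rfl⟩)

theorem preimage_subset (hC : IsGreatestProperConvex A C) (hS : DConvex (F.unfoldArcs Q A) S)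
    (hne : S ≠ Set.univ) (hnt : (F.embProd ⁻¹' S).Nontrivial) : F.embProd ⁻¹' S ⊆ C := by
  refine hC.subset _ ((dirRetraction hA).dConvex_preimage hS hnt.nonempty) (fun h => hne ?_) hnt
  refine eq_univ_of_range_subset hA hQ hF κ hS ?_
  rintro _ ⟨u, rfl⟩
  exact Set.eq_univ_iff_forall.1 h u

theorem isGreatestProperConvex_grow (hA' : StrongConnected A) (hC : IsGreatestProperConvex A C)
    (hend : ∀ j, (F.stem, j) ∈ C) :
    IsGreatestProperConvex (F.unfoldArcs Q A) (F.embProd '' C ∪ (Set.range F.embProd)ᶜ) := by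
  have hattach : ∀ u, ∀ x ∉ Set.range F.embProd,
      F.unfoldArcs Q A (F.embProd u) x ∨ F.unfoldArcs Q A x (F.embProd u) → u ∈ C := by
    intro u x hx h
    rw [eq_of_adj_embProd hx (h.elim (·.1) (·.1.symm))]
    exact hend _
  refine ⟨(dirRetraction hA).dConvex_image_union_compl_range hC.dConvex hattach, fun h => ?_, ?_⟩
  · refine hC.ne_univ (Set.eq_univ_of_forall fun u => ?_)
    rcases h ▸ Set.mem_univ (F.embProd u) with ⟨v, hv, hvu⟩ | hu
    · exact embProd_injective hvu ▸ hv
    · exact absurd ⟨u, rfl⟩ hu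
  · intro S hS hne hnt x hx
    by_contra hxC
    obtain ⟨u, rfl⟩ : x ∈ Set.range F.embProd := by_contra fun h => hxC (.inr h)
    have huC : u ∉ C := fun h => hxC (.inl ⟨u, h, rfl⟩)
    obtain ⟨y, hy, huy⟩ := hS.exists_arc_from (strongConnected_unfoldArcs hA hQ hF hA') hnt hx
    obtain ⟨v, rfl⟩ : y ∈ Set.range F.embProd :=
      by_contra fun h => huC (hattach u y h (.inl huy))
    have huv : u ≠ v := by
      rintro rfl
      exact huy.1.ne rfl
    exact huC (preimage_subset hA hQ hF κ hC hS hne ⟨u, hx, v, hy, huv⟩ hx)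

theorem exists_adj_stem_mem (hA' : StrongConnected A) (hS : DConvex (F.unfoldArcs Q A) S)
    (hnt : S.Nontrivial) {j : γ} (hj : (F.leaf, j) ∈ S) :
    ∃ j', Q.Adj j j' ∧ F.embProd (F.stem, j) ∈ S ∧ F.embProd (F.stem, j') ∈ S := by
  have hO := isOrientation_unfoldArcs (F := F) hA
  have hcyc := CyclicFaces.symm hO (cyclicFaces_leaf hA hF)
  obtain ⟨⟨y, j'⟩, hy, harc⟩ := hS.exists_arc_from (strongConnected_unfoldArcs hA hQ hF hA') hnt hj
  by_cases hyF : (y, j') ∈ Set.range F.embProd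
  · obtain ⟨u, hu⟩ := hyF
    obtain rfl := eq_of_adj_embProd (notMem_range_embProd.2 rfl) (hu ▸ harc.1.symm)
    obtain ⟨j', hj'⟩ := hQ j
    rw [← hu] at hy
    exact ⟨j', hj', hy, hcyc.mem_of_column_mem hO κ hS hj' hj hy⟩
  · obtain rfl := notMem_range_embProd.1 hyF
    have hjj' := adj_row_of_arc hO harc
    exact ⟨j', hjj', hcyc.mem_of_row_mem hO κ hS hjj' hj hy,
      hcyc.mem_of_row_mem hO κ hS hjj'.symm hy hj⟩

theorem isGreatestProperConvex_keep [Nonempty γ] (hA' : StrongConnected A)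
    (hC : IsGreatestProperConvex A C) (hend : IsSealedEnd A C F.stem (F.fold F.leaf)) :
    IsGreatestProperConvex (F.unfoldArcs Q A) (F.embProd '' C) := by
  refine ⟨(dirRetraction hA).dConvex_image hC.dConvex ?_, fun h => ?_, fun S hS hne hnt => ?_⟩
  · rintro u hu ⟨x, j⟩ hx huj
    obtain rfl := eq_of_adj_embProd hx huj.1
    obtain rfl := notMem_range_embProd.1 hx
    exact hend.2.1 _ hu
  · obtain ⟨j⟩ := ‹Nonempty γ›
    obtain ⟨u, -, hu⟩ := h ▸ Set.mem_univ (F.leaf, j)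
    exact notMem_range_embProd.2 rfl ⟨u, hu⟩
  · have hrange : S ⊆ Set.range F.embProd := by
      rintro ⟨x, j⟩ hx
      by_contra hxF
      obtain rfl := notMem_range_embProd.1 hxF
      obtain ⟨j', hj, hjS, hjS'⟩ := exists_adj_stem_mem hA hQ hF κ hA' hS hnt hx
      have hsub := preimage_subset hA hQ hF κ hC hS hne ⟨_, hjS, _, hjS', by simpa using hj.ne⟩
      rcases arc_or_arc_of_adj hA F.stem hj with h | h
      · exact hend.2.2 _ _ h (hsub hjS) (hsub hjS')
      · exact hend.2.2 _ _ h (hsub hjS') (hsub hjS)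
    rw [← Set.image_preimage_eq_of_subset hrange] at hnt ⊢
    exact Set.image_mono (preimage_subset hA hQ hF κ hC hS hne (Set.nontrivial_of_image _ _ hnt))

end UnfoldArcs

end LeafFolding

end LeafFolding

section Grid

variable {n m k : ℕ}

theorem gridGraph_adj {x y : Fin n × Fin m} : (gridGraph n m).Adj x y ↔
    (x.1.val + 1 = y.1.val ∨ y.1.val + 1 = x.1.val) ∧ x.2 = y.2 ∨
    (x.2.val + 1 = y.2.val ∨ y.2.val + 1 = x.2.val) ∧ x.1 = y.1 := by
  rw [gridGraph, SimpleGraph.boxProd_adj, SimpleGraph.pathGraph_adj, SimpleGraph.pathGraph_adj]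

/-- The checkerboard colouring of the grid. -/
def gridColoring (n m : ℕ) : (gridGraph n m).Coloring Bool :=
  SimpleGraph.Coloring.mk (fun x => decide ((x.1.val + x.2.val) % 2 = 0)) fun {x y} h => by
    simp only [gridGraph_adj, Fin.ext_iff] at h
    simp only [ne_eq, decide_eq_decide]
    omega

theorem exists_pathGraph_adj (hm : 2 ≤ m) (j : Fin m) :
    ∃ j', (SimpleGraph.pathGraph m).Adj j j' := by
  simp only [SimpleGraph.pathGraph_adj]
  by_cases hj : j.val + 1 < m
  · exact ⟨⟨j + 1, hj⟩, .inl rfl⟩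
  · exact ⟨⟨j - 1, by omega⟩, .inr (by simp; omega)⟩

/-- Attaching a vertex after the last vertex of a path. -/
def pathFoldLast (hn : 2 ≤ n) :
    LeafFolding (SimpleGraph.pathGraph n) (SimpleGraph.pathGraph (n + 1)) where
  emb := ⟨Fin.castSucc, fun h => by simpa [SimpleGraph.pathGraph_adj] using h⟩
  fold := ⟨fun i => if h : i.val < n then ⟨i, h⟩ else ⟨n - 2, by omega⟩, fun {i j} h => by
    simp only [SimpleGraph.pathGraph_adj] at h ⊢
    split_ifs <;> simp only <;> omega⟩
  leaf := Fin.last n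
  stem := ⟨n - 1, by omega⟩
  fold_emb i := by simp
  emb_ne_leaf := Fin.castSucc_ne_last
  exists_emb_eq x hx := ⟨x.castPred hx, by simp⟩
  adj_leaf_iff i := by simp [SimpleGraph.pathGraph_adj, Fin.ext_iff]; omega

/-- Attaching a vertex before the first vertex of a path. -/
def pathFoldFirst (hn : 2 ≤ n) :
    LeafFolding (SimpleGraph.pathGraph n) (SimpleGraph.pathGraph (n + 1)) where
  emb := ⟨Fin.succ, fun h => by simpa [SimpleGraph.pathGraph_adj] using h⟩
  fold := ⟨fun i => if i.val = 0 then ⟨1, hn⟩ else ⟨i - 1, by omega⟩, fun {i j} h => by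
    simp only [SimpleGraph.pathGraph_adj] at h ⊢
    split_ifs <;> simp only <;> omega⟩
  leaf := 0
  stem := ⟨0, by omega⟩
  fold_emb i := by simp
  emb_ne_leaf := Fin.succ_ne_zero
  exists_emb_eq x hx := ⟨x.pred hx, by simp⟩
  adj_leaf_iff i := by simp [SimpleGraph.pathGraph_adj, Fin.ext_iff]

/-- Some strong orientation of the `n × m` grid has a greatest proper convex set with `k` vertices;
if `growable`, then a row before the first one can be added to that set, and if `keepable`, then a
row after the last one can be kept out of it. -/
def Realizes (n m k : ℕ) (growable keepable : Prop) : Prop :=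
  ∃ A C, IsOrientation (gridGraph n m) A ∧ StrongConnected A ∧ IsGreatestProperConvex A C ∧
    C.ncard = k ∧
    (growable → ∀ i i' : Fin n, i.val = 0 → i'.val = 1 → IsGrowableEnd A C i i') ∧
    (keepable → ∀ i i' : Fin n, i.val + 1 = n → i'.val + 2 = n → IsSealedEnd A C i i')

namespace Realizes

variable {g h : Prop}

theorem mem_strongConvexitySpectrum (hk : Realizes n m k g h) :
    k ∈ strongConvexitySpectrum (gridGraph n m) := by
  obtain ⟨A, C, hA, hstr, hC, rfl, -⟩ := hk
  exact ⟨A, hA, hstr, hC.convexityNumber_eq⟩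

theorem keep (hn : 2 ≤ n) (hm : 2 ≤ m) (hk : Realizes n m k g True) :
    Realizes (n + 1) m k g True := by
  obtain ⟨A, C, hA, hstr, hC, rfl, hgrow, hkeep⟩ := hk
  have : Nonempty (Fin m) := ⟨⟨0, by omega⟩⟩
  have hpos : 0 < n := by omega
  let F := pathFoldLast hn
  have hend := hkeep trivial F.stem (F.fold F.leaf) (by simp [F, pathFoldLast]; omega)
    (by simp [F, pathFoldLast]; omega)
  have hQ := exists_pathGraph_adj hm
  have hpre : F.embProd ⁻¹' (F.embProd '' C) = C :=
    Set.preimage_image_eq C LeafFolding.embProd_injective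
  refine ⟨F.unfoldArcs _ A, F.embProd '' C, LeafFolding.isOrientation_unfoldArcs hA,
    LeafFolding.strongConnected_unfoldArcs hA hQ hend.1 hstr,
    LeafFolding.isGreatestProperConvex_keep hA hQ hend.1 (gridColoring _ _) hstr hC hend,
    Set.ncard_image_of_injective C LeafFolding.embProd_injective, fun hg i i' hi hi' => ?_,
    fun _ i i' hi hi' => ?_⟩
  · obtain rfl : i = F.emb ⟨0, hpos⟩ := Fin.ext hi
    obtain rfl : i' = F.emb ⟨1, hn⟩ := Fin.ext hi'
    exact LeafFolding.isGrowableEnd_embProd hA (hgrow hg _ _ rfl rfl) hpre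
  · obtain rfl : i = F.leaf := Fin.ext (by simp [F, pathFoldLast]; omega)
    obtain rfl : i' = F.emb F.stem := Fin.ext (by simp [F, pathFoldLast]; omega)
    exact LeafFolding.isSealedEnd_leaf hA hend.1
      fun j ⟨u, _, hu⟩ => F.emb_ne_leaf _ (congrArg Prod.fst hu)

theorem grow (hn : 2 ≤ n) (hm : 2 ≤ m) (hk : Realizes n m k True h) :
    Realizes (n + 1) m (k + m) True h := by
  obtain ⟨A, C, hA, hstr, hC, rfl, hgrow, hkeep⟩ := hk
  let F := pathFoldFirst hn
  let last : Fin n := ⟨n - 1, by omega⟩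
  let beforeLast : Fin n := ⟨n - 2, by omega⟩
  have hend := hgrow trivial F.stem (F.fold F.leaf) rfl rfl
  have hQ := exists_pathGraph_adj hm
  have hpre : F.embProd ⁻¹' (F.embProd '' C ∪ (Set.range F.embProd)ᶜ) = C :=
    LeafFolding.preimage_image_union_compl_range C
  refine ⟨F.unfoldArcs _ A, F.embProd '' C ∪ (Set.range F.embProd)ᶜ,
    LeafFolding.isOrientation_unfoldArcs hA,
    LeafFolding.strongConnected_unfoldArcs hA hQ hend.1 hstr,
    LeafFolding.isGreatestProperConvex_grow hA hQ hend.1 (gridColoring _ _) hstr hC hend.2,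
    ?_, fun _ i i' hi hi' => ?_, fun hh i i' hi hi' => ?_⟩
  · rw [LeafFolding.ncard_image_union_compl_range, Fintype.card_fin]
  · obtain rfl : i = F.leaf := Fin.ext hi
    obtain rfl : i' = F.emb F.stem := Fin.ext hi'
    exact LeafFolding.isGrowableEnd_leaf hA hend.1
      fun j => .inr (LeafFolding.notMem_range_embProd.2 rfl)
  · obtain rfl : i = F.emb last := Fin.ext (by simp [F, pathFoldFirst, last]; omega)
    obtain rfl : i' = F.emb beforeLast :=
      Fin.ext (by simp [F, pathFoldFirst, beforeLast]; omega)
    exact LeafFolding.isSealedEnd_embProd hA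
      (hkeep hh _ _ (by simp [last]; omega) (by simp [beforeLast]; omega)) hpre

theorem keep_iterate (hn : 2 ≤ n) (hm : 2 ≤ m) (hk : Realizes n m k g True) (b : ℕ) :
    Realizes (n + b) m k g True := by
  induction b with
  | zero => exact hk
  | succ b ih => exact ih.keep (hn.trans (n.le_add_right b)) hm

theorem grow_iterate (hn : 2 ≤ n) (hm : 2 ≤ m) (hk : Realizes n m k True h) (a : ℕ) :
    Realizes (n + a) m (k + a * m) True h := by
  induction a with
  | zero => simpa using hk
  | succ a ih => simpa [add_assoc, add_mul] using ih.grow (hn.trans (n.le_add_right a)) hm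

end Realizes

end Grid

section DirDist

variable {A : V → V → Prop} {d : V → V → ℕ} {C : Set V} {k : ℕ} {u v w : V}

/-- A certificate that `d` is the distance function of the digraph `A` and that all distances are
finite. -/
structure IsDirDist (A : V → V → Prop) (d : V → V → ℕ) : Prop where
  self : ∀ u, d u u = 0
  le_succ : ∀ x y, A x y → ∀ u, d u y ≤ d u x + 1
  exists_pred : ∀ u y, u ≠ y → ∃ x, d u x + 1 = d u y ∧ A x y

instance [Fintype V] [DecidableEq V] [DecidableRel A] : Decidable (IsDirDist A d) :=
  decidable_of_iff ((∀ u, d u u = 0) ∧ (∀ x y, A x y → ∀ u, d u y ≤ d u x + 1) ∧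
    ∀ u y, u ≠ y → ∃ x, d u x + 1 = d u y ∧ A x y)
    ⟨fun h => ⟨h.1, h.2.1, h.2.2⟩, fun h => ⟨h.1, h.2, h.3⟩⟩

namespace IsDirDist

theorem le_of_hasDirWalk (h : IsDirDist A d) (hk : HasDirWalk A k u v) : d u v ≤ k := by
  suffices key : ∀ x, HasDirWalk A k x v → d u v ≤ d u x + k by simpa [h.self] using key u hk
  clear hk
  intro x hx
  induction k generalizing x with
  | zero => simp [hasDirWalk_zero.1 hx]
  | succ k ih =>
    obtain ⟨y, hxy, hyv⟩ := hasDirWalk_succ.1 hx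
    have := h.le_succ x y hxy u
    have := ih y hyv
    omega

theorem hasDirWalk (h : IsDirDist A d) (u v : V) : HasDirWalk A (d u v) u v := by
  induction hk : d u v generalizing v with
  | zero =>
    refine hasDirWalk_zero.2 (by_contra fun hne => ?_)
    obtain ⟨x, hx, -⟩ := h.exists_pred u v hne
    omega
  | succ k ih =>
    obtain ⟨x, hx, hxv⟩ := h.exists_pred u v (by rintro rfl; simp [h.self] at hk)
    exact (ih x (by omega)).append (.of_arc hxv)

theorem strongConnected (h : IsDirDist A d) : StrongConnected A :=
  fun u v => ⟨_, h.hasDirWalk u v⟩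

theorem mem_of_between (h : IsDirDist A d) (hC : DConvex A C) (hu : u ∈ C) (hv : v ∈ C)
    (hw : d u w + d w v = d u v) : w ∈ C :=
  hC.mem_of_hasDirWalk hu hv (h.hasDirWalk u w) (h.hasDirWalk w v)
    fun _ hk => hw ▸ h.le_of_hasDirWalk hk

theorem dConvex (h : IsDirDist A d) (hne : C.Nonempty)
    (hC : ∀ u ∈ C, ∀ v ∈ C, ∀ w, d u w + d w v = d u v → w ∈ C) : DConvex A C := by
  refine ⟨hne, fun u hu v hv k f hf i hi => hC u hu v hv (f i) ?_⟩
  have hui := h.le_of_hasDirWalk (hf.1.1 ▸ hf.1.hasDirWalk_segment i.zero_le hi)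
  have hiv := h.le_of_hasDirWalk (hf.1.2.1 ▸ hf.1.hasDirWalk_segment hi le_rfl)
  obtain ⟨_, hg⟩ := (h.hasDirWalk u (f i)).append (h.hasDirWalk (f i) v)
  obtain ⟨_, hg'⟩ := h.hasDirWalk u v
  have := hf.2 _ _ hg
  have := hf.2 _ _ hg'
  have := h.le_of_hasDirWalk ⟨f, hf.1⟩
  omega

end IsDirDist

end DirDist

section BitMasks

variable {n m : ℕ}

/-- Row-major numbering of the vertices of the grid; sets of vertices are encoded as natural
numbers whose binary digit number `gridCode x` tells whether `x` is in the set. -/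
def gridCode (x : Fin n × Fin m) : ℕ := m * x.1 + x.2

/-- The set of grid vertices encoded by `c`. -/
def bitSet (n m c : ℕ) : Set (Fin n × Fin m) := {x | c.testBit (gridCode x)}

instance (c : ℕ) : DecidablePred (· ∈ bitSet n m c) :=
  fun x => inferInstanceAs (Decidable (c.testBit (gridCode x) = true))

/-- The grid vertices in the order of their codes. -/
def gridVertices (n m : ℕ) : List (Fin n × Fin m) := List.finRange n ×ˢ List.finRange m

/-- The code of the set of members of `l`. -/
def bitMask (l : List (Fin n × Fin m)) : ℕ := l.foldr (fun x c => c ||| 2 ^ gridCode x) 0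

theorem gridCode_injective : Function.Injective (gridCode (n := n) (m := m)) := by
  intro x y h
  refine finProdFinEquiv.injective (Fin.ext ?_)
  simpa [gridCode, add_comm] using h

theorem gridCode_lt (x : Fin n × Fin m) : gridCode x < n * m := by
  simpa [gridCode, add_comm] using (finProdFinEquiv x).isLt

theorem bitSet_or (c d : ℕ) : bitSet n m (c ||| d) = bitSet n m c ∪ bitSet n m d := by
  ext x
  simp [bitSet]

theorem mem_bitSet_bitMask {l : List (Fin n × Fin m)} {x : Fin n × Fin m} :
    x ∈ bitSet n m (bitMask l) ↔ x ∈ l := by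
  induction l with
  | nil => simp [bitSet, bitMask]
  | cons y l ih =>
    rw [List.mem_cons, ← ih, or_comm, ← gridCode_injective.eq_iff, eq_comm (a := gridCode x)]
    simp only [bitSet, bitMask, List.foldr_cons, Set.mem_ofPred_eq, Nat.testBit_or,
      Nat.testBit_two_pow, Bool.or_eq_true, decide_eq_true_eq]

theorem bitSet_bitMask_subset {l : List (Fin n × Fin m)} {T : Set (Fin n × Fin m)} :
    bitSet n m (bitMask l) ⊆ T ↔ ∀ x ∈ l, x ∈ T :=
  forall_congr' fun _ => imp_congr_left mem_bitSet_bitMask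

theorem bitSet_two_pow_sub_one (n m : ℕ) : bitSet n m (2 ^ (n * m) - 1) = Set.univ := by
  ext x
  simp [bitSet, Nat.testBit_two_pow_sub_one, gridCode_lt]

/-- The orientation of the grid in which the edge from `x` to the next vertex of its row (of its
column) leaves `x` if and only if `x` is in the set encoded by `h` (by `v`). -/
def bitArc (h v : ℕ) (x y : Fin n × Fin m) : Prop :=
  (x.1.val == y.1.val && (x.2.val + 1 == y.2.val && h.testBit (gridCode x) ||
      y.2.val + 1 == x.2.val && !h.testBit (gridCode y)) ||
    x.2.val == y.2.val && (x.1.val + 1 == y.1.val && v.testBit (gridCode x) ||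
      y.1.val + 1 == x.1.val && !v.testBit (gridCode y))) = true

instance (h v : ℕ) : DecidableRel (bitArc h v : Fin n × Fin m → Fin n × Fin m → Prop) :=
  fun _ _ => inferInstanceAs (Decidable (_ = true))

theorem isOrientation_bitArc (h v : ℕ) :
    IsOrientation (gridGraph n m) (bitArc h v) := by
  refine ⟨fun x y => ?_, fun x y => ?_, fun x y => ?_⟩ <;>
    simp only [gridGraph_adj, bitArc, Fin.ext_iff, Bool.or_eq_true, Bool.and_eq_true,
      Bool.not_eq_true', beq_iff_eq] <;> grind

end BitMasks

section ConvexHulls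

variable {n m h v c d : ℕ} {T : Set (Fin n × Fin m)}

/-- The union of the set encoded by `d` and of those entries of `l` whose vertex is in the set
encoded by `c`; an entry of `l` consists of the code of a vertex and the code of a set. -/
def unionOver (c : ℕ) (l : List (ℕ × ℕ)) (d : ℕ) : ℕ :=
  l.foldl (fun d e => bif c.testBit e.1 then d ||| e.2 else d) d

/-- The number whose digits in base 16 are the distances in the digraph `bitArc h v` between any
two vertices, provided that all of them are at most 15: the distance from `u` to `y` is the number
of those balls around `u` of radius at most 14 which do not contain `y`. -/
def distTable (n m h v : ℕ) : ℕ :=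
  let outNeighbors := (gridVertices n m).map fun x =>
    (gridCode x, bitMask ((gridVertices n m).filter fun y => bitArc h v x y))
  Nat.ofDigits 16 <| (gridVertices n m).flatMap fun u =>
    let balls := List.iterate (fun b => unionOver b outNeighbors b) (2 ^ gridCode u) 15
    (gridVertices n m).map fun y => balls.countP fun b => !b.testBit (gridCode y)

/-- The distance from `x` to `y` in the digraph `bitArc h v` as recorded in `distTable`; that it
really is the distance has to be verified by means of `IsDirDist`. -/
def bitDist (h v : ℕ) (x y : Fin n × Fin m) : ℕ :=
  distTable n m h v >>> (4 * (n * m * gridCode x + gridCode y)) % 16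

/-- The geodesic intervals from `u` in the digraph `bitArc h v`. -/
def intervalsFrom (h v : ℕ) (u : Fin n × Fin m) : List (ℕ × ℕ) :=
  (gridVertices n m).map fun w => (gridCode w, bitMask ((gridVertices n m).filter fun x =>
    bitDist h v u x + bitDist h v x w == bitDist h v u w))

/-- The union of all geodesic intervals between vertices of the set encoded by `c`. -/
def unionOfIntervals (n m h v c : ℕ) : ℕ :=
  ((gridVertices n m).map fun u => (gridCode u, intervalsFrom h v u)).foldl
    (fun d e => bif c.testBit e.1 then unionOver c e.2 d else d) c

/-- The set obtained from the one encoded by `c` by `fuel` times adding geodesic intervals, stopping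
as soon as all vertices are reached. -/
def hullMask (n m h v : ℕ) : ℕ → ℕ → ℕ
  | 0, c => c
  | fuel + 1, c =>
    bif c == 2 ^ (n * m) - 1 then c else hullMask n m h v fuel (unionOfIntervals n m h v c)

theorem bitSet_unionOver_subset {l : List (ℕ × ℕ)} (hd : bitSet n m d ⊆ T)
    (hl : ∀ e ∈ l, c.testBit e.1 → bitSet n m e.2 ⊆ T) : bitSet n m (unionOver c l d) ⊆ T := by
  refine List.foldlRecOn (motive := fun d => bitSet n m d ⊆ T) l _ hd fun d hd e he => ?_
  cases hc : c.testBit e.1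
  · simpa using hd
  · simpa [bitSet_or] using ⟨hd, hl e he hc⟩

section VerifiedDistances

variable (hA : IsDirDist (bitArc h v : Fin n × Fin m → Fin n × Fin m → Prop) (bitDist h v))
  (hT : DConvex (bitArc h v : Fin n × Fin m → Fin n × Fin m → Prop) T)
include hA hT

theorem bitSet_unionOfIntervals_subset (hc : bitSet n m c ⊆ T) :
    bitSet n m (unionOfIntervals n m h v c) ⊆ T := by
  refine List.foldlRecOn (motive := fun d => bitSet n m d ⊆ T) _ _ hc fun d hd e he => ?_
  obtain ⟨u, -, rfl⟩ := List.mem_map.1 he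
  cases hu : c.testBit (gridCode u)
  · simpa using hd
  refine bitSet_unionOver_subset hd fun e he hw x hx => ?_
  obtain ⟨w, -, rfl⟩ := List.mem_map.1 he
  rw [mem_bitSet_bitMask, List.mem_filter, beq_iff_eq] at hx
  exact hA.mem_of_between hT (hc hu) (hc hw) hx.2

theorem bitSet_hullMask_subset {fuel : ℕ} (hc : bitSet n m c ⊆ T) :
    bitSet n m (hullMask n m h v fuel c) ⊆ T := by
  induction fuel generalizing c with
  | zero => exact hc
  | succ fuel ih =>
    rw [hullMask]
    cases c == 2 ^ (n * m) - 1
    · exact ih (bitSet_unionOfIntervals_subset hA hT hc)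
    · exact hc

theorem eq_univ_of_hullMask_eq {fuel : ℕ} (hc : bitSet n m c ⊆ T)
    (hfull : hullMask n m h v fuel c = 2 ^ (n * m) - 1) : T = Set.univ := by
  have := bitSet_hullMask_subset hA hT (fuel := fuel) hc
  rwa [hfull, bitSet_two_pow_sub_one, Set.univ_subset_iff] at this

end VerifiedDistances

end ConvexHulls

section Certificates

variable {n m h v c k : ℕ}

instance {α γ : Type*} [Fintype γ] (A : α × γ → α × γ → Prop) [DecidableRel A] (i i' : α) :
    Decidable (CyclicFaces A i i') := by
  unfold CyclicFaces
  infer_instance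

instance {α γ : Type*} [Fintype γ] (A : α × γ → α × γ → Prop) [DecidableRel A] (C : Set (α × γ))
    [DecidablePred (· ∈ C)] (i i' : α) : Decidable (IsGrowableEnd A C i i') := by
  unfold IsGrowableEnd
  infer_instance

instance {α γ : Type*} [Fintype γ] (A : α × γ → α × γ → Prop) [DecidableRel A] (C : Set (α × γ))
    [DecidablePred (· ∈ C)] (i i' : α) : Decidable (IsSealedEnd A C i i') := by
  unfold IsSealedEnd
  infer_instance

theorem ncard_bitSet (c : ℕ) :
    (bitSet n m c).ncard = (Finset.univ.filter (· ∈ bitSet n m c)).card := by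
  rw [← Set.ncard_coe_finset, Finset.coe_filter_univ]
  rfl

/-- A verification by computation that `bitSet n m c` is a proper convex set of the strong digraph
`bitArc h v` with `k` elements. -/
def ConvexCertificate (n m h v c k : ℕ) : Prop :=
  IsDirDist (bitArc h v : Fin n × Fin m → Fin n × Fin m → Prop) (bitDist h v) ∧
  (∃ x, x ∈ bitSet n m c) ∧ (∃ x, x ∉ bitSet n m c) ∧
  (∀ x ∈ bitSet n m c, ∀ y ∈ bitSet n m c, ∀ z,
    bitDist h v x z + bitDist h v z y = bitDist h v x y → z ∈ bitSet n m c) ∧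
  (Finset.univ.filter (· ∈ bitSet n m c)).card = k

instance : Decidable (ConvexCertificate n m h v c k) := by
  unfold ConvexCertificate
  infer_instance

namespace ConvexCertificate

theorem isDirDist (hC : ConvexCertificate n m h v c k) :
    IsDirDist (bitArc h v : Fin n × Fin m → Fin n × Fin m → Prop) (bitDist h v) :=
  hC.1

theorem dConvex (hC : ConvexCertificate n m h v c k) :
    DConvex (bitArc h v) (bitSet n m c) :=
  hC.1.dConvex hC.2.1 hC.2.2.2.1

theorem ne_univ (hC : ConvexCertificate n m h v c k) : bitSet n m c ≠ Set.univ :=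
  (Set.ne_univ_iff_exists_notMem _).2 hC.2.2.1

theorem ncard_eq (hC : ConvexCertificate n m h v c k) : (bitSet n m c).ncard = k :=
  (ncard_bitSet c).trans hC.2.2.2.2

end ConvexCertificate

/-- A verification by computation of `Realizes n m k g b` for the digraph `bitArc h v` and the set
`bitSet n m c`: the convex hull of every arc which does not lie in this set is the whole grid. -/
def GreatestCertificate (n m h v c k : ℕ) (g b : Prop) : Prop :=
  ConvexCertificate n m h v c k ∧
  (∀ x y : Fin n × Fin m, bitArc h v x y → ¬ (x ∈ bitSet n m c ∧ y ∈ bitSet n m c) →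
    hullMask n m h v 16 (bitMask [x, y]) = 2 ^ (n * m) - 1) ∧
  (g → ∀ i i' : Fin n, i.val = 0 → i'.val = 1 → IsGrowableEnd (bitArc h v) (bitSet n m c) i i') ∧
  (b → ∀ i i' : Fin n, i.val + 1 = n → i'.val + 2 = n →
    IsSealedEnd (bitArc h v) (bitSet n m c) i i')

set_option synthInstance.maxSize 400 in
instance {g b : Prop} [Decidable g] [Decidable b] :
    Decidable (GreatestCertificate n m h v c k g b) := by
  unfold GreatestCertificate
  infer_instance

theorem GreatestCertificate.realizes {g b : Prop} (hcert : GreatestCertificate n m h v c k g b) :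
    Realizes n m k g b := by
  obtain ⟨hC, harc, hgrow, hseal⟩ := hcert
  have hstr := hC.isDirDist.strongConnected
  refine ⟨_, _, isOrientation_bitArc h v, hstr, ⟨hC.dConvex, hC.ne_univ, ?_⟩, hC.ncard_eq, hgrow,
    hseal⟩
  intro S hS hne hnt x hx
  by_contra hxC
  obtain ⟨y, hy, hxy⟩ := hS.exists_arc_from hstr hnt hx
  exact hne (eq_univ_of_hullMask_eq hC.isDirDist hS (bitSet_bitMask_subset.2 (by simp [hx, hy]))
    (harc x y hxy fun h => hxC h.1))

end Certificates

section Constructions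

variable {n m k : ℕ}

set_option maxRecDepth 5000

theorem realizes_4_1 : Realizes 4 4 1 False True :=
  GreatestCertificate.realizes (h := 21074) (v := 1445) (c := 1) (by decide +kernel)

theorem realizes_4_4 : Realizes 4 4 4 False True :=
  GreatestCertificate.realizes (h := 9479) (v := 2682) (c := 51) (by decide +kernel)

theorem realizes_4_6 : Realizes 4 4 6 False True :=
  GreatestCertificate.realizes (h := 9568) (v := 2579) (c := 238) (by decide +kernel)

theorem realizes_4_8 : Realizes 4 4 8 False True :=
  GreatestCertificate.realizes (h := 21059) (v := 1510) (c := 255) (by decide +kernel)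

theorem realizes_5_7 : Realizes 5 4 7 False True :=
  GreatestCertificate.realizes (h := 336723) (v := 22054) (c := 1772) (by decide +kernel)

theorem realizes_5_9 : Realizes 5 4 9 False True :=
  GreatestCertificate.realizes (h := 151649) (v := 42050) (c := 1911) (by decide +kernel)

theorem realizes_4_9 : Realizes 4 4 9 False False :=
  GreatestCertificate.realizes (h := 29458) (v := 277) (c := 1911) (by decide +kernel)

theorem realizes_4_10 : Realizes 4 4 10 True False :=
  GreatestCertificate.realizes (h := 29266) (v := 821) (c := 1791) (by decide +kernel)

theorem realizes_4_11 : Realizes 4 4 11 True False :=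
  GreatestCertificate.realizes (h := 29522) (v := 277) (c := 2047) (by decide +kernel)

theorem realizes_4_12 : Realizes 4 4 12 True False :=
  GreatestCertificate.realizes (h := 26194) (v := 1637) (c := 4095) (by decide +kernel)

theorem realizes_5_13 : Realizes 5 4 13 True False :=
  GreatestCertificate.realizes (h := 463698) (v := 4405) (c := 14335) (by decide +kernel)

theorem realizes_5_10 : Realizes 5 4 10 True True :=
  GreatestCertificate.realizes (h := 337490) (v := 24037) (c := 1023) (by decide +kernel)

theorem realizes_5_11 : Realizes 5 4 11 True True :=
  GreatestCertificate.realizes (h := 152146) (v := 42789) (c := 2047) (by decide +kernel)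

theorem realizes_5_12 : Realizes 5 4 12 True True :=
  GreatestCertificate.realizes (h := 335954) (v := 21925) (c := 4095) (by decide +kernel)

theorem realizes_6_13 : Realizes 6 4 13 True True :=
  GreatestCertificate.realizes (h := 2426450) (v := 670517) (c := 52991) (by decide +kernel)

/-- Here the proper convex set with 7 vertices, encoded by 1651, is only greatest in size: the
`2 × 2` square encoded by 52224 is a proper convex set, too. -/
theorem seven_mem_strongConvexitySpectrum :
    7 ∈ strongConvexitySpectrum (gridGraph 4 4) := by
  obtain ⟨hC, hB, harc, hleave⟩ : ConvexCertificate 4 4 1878 2217 1651 7 ∧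
      (Finset.univ.filter (· ∈ bitSet 4 4 52224)).card = 4 ∧
      (∀ x y : Fin 4 × Fin 4, bitArc 1878 2217 x y → x ∉ bitSet 4 4 1651 →
        hullMask 4 4 1878 2217 16 (bitMask [x, y]) = 2 ^ (4 * 4) - 1 ∨
        hullMask 4 4 1878 2217 16 (bitMask [x, y]) = 52224) ∧
      ∀ x y : Fin 4 × Fin 4, bitArc 1878 2217 x y → x ∈ bitSet 4 4 52224 → y ∉ bitSet 4 4 52224 →
        hullMask 4 4 1878 2217 16 (52224 ||| bitMask [y]) = 2 ^ (4 * 4) - 1 := by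
    decide +kernel
  have hstr := hC.isDirDist.strongConnected
  refine ⟨_, isOrientation_bitArc 1878 2217, hstr, ?_⟩
  rw [convexityNumber_eq_ncard hC.dConvex hC.ne_univ fun S hS hne hnt => ?_, hC.ncard_eq]
  by_cases hSC : S ⊆ bitSet 4 4 1651
  · exact Set.ncard_le_ncard hSC
  obtain ⟨x, hx, hxC⟩ := Set.not_subset.1 hSC
  obtain ⟨y, hy, hxy⟩ := hS.exists_arc_from hstr hnt hx
  have hxyS : bitSet 4 4 (bitMask [x, y]) ⊆ S := bitSet_bitMask_subset.2 (by simp [hx, hy])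
  have hBS : bitSet 4 4 52224 ⊆ S := by
    rcases harc x y hxy hxC with hfull | hB
    · exact absurd (eq_univ_of_hullMask_eq hC.isDirDist hS hxyS hfull) hne
    · exact hB ▸ bitSet_hullMask_subset hC.isDirDist hS hxyS
  obtain rfl : bitSet 4 4 52224 = S := by
    by_contra hBne
    have hBnonempty : (bitSet 4 4 52224).Nonempty := by
      rw [← Set.ncard_pos, ncard_bitSet, hB]
      norm_num
    obtain ⟨u, hu, w, hw, huw⟩ := hS.exists_arc_leaving hstr hBnonempty (hBS.ssubset_of_ne hBne)
    refine hne (eq_univ_of_hullMask_eq hC.isDirDist hS ?_ (hleave u w huw hu hw.2))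
    rw [bitSet_or, Set.union_subset_iff]
    exact ⟨hBS, bitSet_bitMask_subset.2 (by simpa using hw.1)⟩
  rw [ncard_bitSet, hB, hC.ncard_eq]
  norm_num

theorem mem_strongConvexitySpectrum_of_grow {n₀ k₀ a : ℕ} (hn₀ : 2 ≤ n₀)
    (hm : 2 ≤ m) (htight : Realizes n₀ m k₀ True False)
    (hloose : Realizes (n₀ + 1) m k₀ True True) (hn : n₀ + a ≤ n) :
    k₀ + a * m ∈ strongConvexitySpectrum (gridGraph n m) := by
  obtain rfl | hlt := hn.eq_or_lt
  · exact (htight.grow_iterate hn₀ hm a).mem_strongConvexitySpectrum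
  · obtain ⟨b, rfl⟩ : ∃ b, n = n₀ + 1 + a + b := ⟨n - (n₀ + 1 + a), by omega⟩
    have hgrown := hloose.grow_iterate (by omega) hm a
    exact (hgrown.keep_iterate (by omega) hm b).mem_strongConvexitySpectrum

theorem mem_strongConvexitySpectrum_of_lt_ten (hn : 4 ≤ n) (hk : 1 ≤ k) (hk' : k < 10)
    (h2 : k ≠ 2) (h3 : k ≠ 3) (h5 : k ≠ 5) : k ∈ strongConvexitySpectrum (gridGraph n 4) := by
  have hkeep {n₀ k : ℕ} (hn₀ : 2 ≤ n₀) (h : Realizes n₀ 4 k False True) (hle : n₀ ≤ n) :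
      k ∈ strongConvexitySpectrum (gridGraph n 4) := by
    obtain ⟨b, rfl⟩ := Nat.exists_eq_add_of_le hle
    exact (h.keep_iterate hn₀ (by norm_num) b).mem_strongConvexitySpectrum
  obtain rfl | rfl | rfl | rfl | rfl | rfl : k = 1 ∨ k = 4 ∨ k = 6 ∨ k = 7 ∨ k = 8 ∨ k = 9 := by
    omega
  · exact hkeep (by norm_num) realizes_4_1 hn
  · exact hkeep (by norm_num) realizes_4_4 hn
  · exact hkeep (by norm_num) realizes_4_6 hn
  · obtain rfl | hn := hn.eq_or_lt
    · exact seven_mem_strongConvexitySpectrum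
    · exact hkeep (by norm_num) realizes_5_7 hn
  · exact hkeep (by norm_num) realizes_4_8 hn
  · obtain rfl | hn := hn.eq_or_lt
    · exact realizes_4_9.mem_strongConvexitySpectrum
    · exact hkeep (by norm_num) realizes_5_9 hn

theorem mem_strongConvexitySpectrum_of_ten_le (hk : 10 ≤ k) (hkn : k ≤ 4 * n - 4) :
    k ∈ strongConvexitySpectrum (gridGraph n 4) := by
  have hdiv : k = 10 + (k - 10) / 4 * 4 ∨ k = 11 + (k - 10) / 4 * 4 ∨
      k = 12 + (k - 10) / 4 * 4 ∨ k = 13 + (k - 10) / 4 * 4 := by omega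
  rcases hdiv with h | h | h | h <;> rw [h]
  · exact mem_strongConvexitySpectrum_of_grow (by simp) (by simp) realizes_4_10 realizes_5_10
      (by omega)
  · exact mem_strongConvexitySpectrum_of_grow (by simp) (by simp) realizes_4_11 realizes_5_11
      (by omega)
  · exact mem_strongConvexitySpectrum_of_grow (by simp) (by simp) realizes_4_12 realizes_5_12
      (by omega)
  · exact mem_strongConvexitySpectrum_of_grow (by simp) (by simp) realizes_5_13 realizes_6_13
      (by omega)

end Constructions

section SmallConvexSets

variable {G : SimpleGraph V} {A : V → V → Prop} {S : Set V}

theorem DConvex.nontrivial_inter_neighborSet (hS : DConvex A S) (hA : IsOrientation G A)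
    (hstr : StrongConnected A) (hnt : S.Nontrivial) {u : V} (hu : u ∈ S) :
    (S ∩ G.neighborSet u).Nontrivial := by
  obtain ⟨v, hv, huv⟩ := hS.exists_arc_from hstr hnt hu
  obtain ⟨w, hw, hwu⟩ := hS.flip.exists_arc_from hstr.flip hnt hu
  exact ⟨v, ⟨hv, hA.1 _ _ huv⟩, w, ⟨hw, (hA.1 _ _ hwu).symm⟩,
    fun h => hA.2.2 _ _ huv (h ▸ hwu)⟩

section MinDegreeTwo

variable (κ : G.Coloring Bool) {b : Bool}

theorem inter_neighborSet_subset_colorClass {u : V} (hu : κ u = !b) :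
    S ∩ G.neighborSet u ⊆ S ∩ κ.colorClass b := by
  refine Set.inter_subset_inter_right S fun v hv => ?_
  have hne := κ.valid hv
  rw [hu] at hne
  exact Bool.not_eq_not.1 hne.symm

variable (hdeg : ∀ u ∈ S, (S ∩ G.neighborSet u).Nontrivial)
include hdeg

theorem nontrivial_inter_colorClass (hne : S.Nonempty) : (S ∩ κ.colorClass b).Nontrivial := by
  have hopp : ∀ u ∈ S, κ u = !b → (S ∩ κ.colorClass b).Nontrivial := fun u hu hub =>
    (hdeg u hu).mono (inter_neighborSet_subset_colorClass κ hub)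
  obtain ⟨u, hu⟩ := hne
  rcases Bool.eq_or_eq_not (κ u) b with hub | hub
  · obtain ⟨v, hv, huv⟩ := (hdeg u hu).nonempty
    exact hopp v hv (hub ▸ Bool.eq_not.2 (κ.valid huv).symm)
  · exact hopp u hu hub

theorem ncard_inter_colorClass_not_le_two [Finite V]
    (hcommon : ∀ p q, p ≠ q → (G.commonNeighbors p q).ncard ≤ 2)
    (hb : (S ∩ κ.colorClass b).ncard = 2) : (S ∩ κ.colorClass !b).ncard ≤ 2 := by
  obtain ⟨p, q, hpq, hS⟩ := Set.ncard_eq_two.1 hb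
  refine (Set.ncard_le_ncard fun x hx => ?_).trans (hcommon p q hpq)
  have hsub : S ∩ G.neighborSet x ⊆ {p, q} := hS ▸ inter_neighborSet_subset_colorClass κ hx.2
  obtain ⟨y, hy, z, hz, hyz⟩ := hdeg x hx.1
  rcases hsub hy with rfl | rfl <;> rcases hsub hz with rfl | rfl
  · exact absurd rfl hyz
  · exact ⟨hy.2.symm, hz.2.symm⟩
  · exact ⟨hz.2.symm, hy.2.symm⟩
  · exact absurd rfl hyz

include κ in
theorem ncard_eq_four_or_six_le [Finite V] (hne : S.Nonempty)
    (hcommon : ∀ p q, p ≠ q → (G.commonNeighbors p q).ncard ≤ 2) :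
    S.ncard = 4 ∨ 6 ≤ S.ncard := by
  have hsum := Set.ncard_inter_add_ncard_sdiff_eq_ncard S (κ.colorClass true)
  have hdiff : S \ κ.colorClass true = S ∩ κ.colorClass false := by
    ext x
    simp [SimpleGraph.Coloring.colorClass]
  have htwo (b : Bool) : 2 ≤ (S ∩ κ.colorClass b).ncard :=
    Set.one_lt_ncard_iff_nontrivial.2 (nontrivial_inter_colorClass κ hdeg hne)
  have hle (b : Bool) := ncard_inter_colorClass_not_le_two κ hdeg hcommon (b := b)
  have := htwo true
  have := htwo false
  have := hle true
  have := hle false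
  rw [hdiff] at hsum
  simp only [Bool.not_true, Bool.not_false] at *
  omega

end MinDegreeTwo

end SmallConvexSets

section GridGeometry

variable {n m : ℕ}

theorem gridGraph_ncard_commonNeighbors_le_two {p q : Fin n × Fin m} (hpq : p ≠ q) :
    ((gridGraph n m).commonNeighbors p q).ncard ≤ 2 := by
  have hsubset (hne : p.1 ≠ q.1 ∧ p.2 ≠ q.2) :
      (gridGraph n m).commonNeighbors p q ⊆ {(p.1, q.2), (q.1, p.2)} := by
    rintro x ⟨hp, hq⟩
    simp only [SimpleGraph.mem_neighborSet, gridGraph_adj, Fin.ext_iff, ne_eq] at hp hq hne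
    simp only [Set.mem_insert_iff, Set.mem_singleton_iff, Prod.ext_iff, Fin.ext_iff]
    omega
  rcases Set.subsingleton_or_nontrivial ((gridGraph n m).commonNeighbors p q) with
    hsub | ⟨x, ⟨hxp, hxq⟩, y, ⟨hyp, hyq⟩, hxy⟩
  · exact (Set.ncard_le_one_iff_subsingleton.2 hsub).trans one_le_two
  · refine (Set.ncard_le_ncard (hsubset ?_)).trans
      ((Set.ncard_insert_le _ _).trans_eq (by rw [Set.ncard_singleton]))
    simp only [SimpleGraph.mem_neighborSet, gridGraph_adj, Prod.ext_iff, Fin.ext_iff, ne_eq] at *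
    omega

end GridGeometry

section Taxicab

variable {n m : ℕ} {A : Fin n × Fin m → Fin n × Fin m → Prop} {C : Set (Fin n × Fin m)}
  {t u v : Fin n × Fin m} {i j k : ℕ}

/-- The distance between two vertices of the undirected grid. -/
def taxicab (x y : Fin n × Fin m) : ℕ :=
  ((x.1 : ℤ) - y.1).natAbs + ((x.2 : ℤ) - y.2).natAbs

theorem taxicab_le_of_hasDirWalk (hA : IsOrientation (gridGraph n m) A)
    (h : HasDirWalk A k u v) : taxicab u v ≤ k := by
  induction k generalizing u with
  | zero => simp [hasDirWalk_zero.1 h, taxicab]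
  | succ k ih =>
    obtain ⟨w, huw, hwv⟩ := hasDirWalk_succ.1 h
    have hadj := hA.1 _ _ huw
    have hle := ih hwv
    simp only [gridGraph_adj, Fin.ext_iff] at hadj
    simp only [taxicab] at hle ⊢
    omega

theorem DConvex.taxicab_lt (hC : DConvex A C) (hA : IsOrientation (gridGraph n m) A)
    (hu : u ∈ C) (hv : v ∈ C) (ht : t ∉ C) (hut : HasDirWalk A i u t) (htv : HasDirWalk A j t v) :
    taxicab u v < i + j := by
  by_contra! hle
  exact ht (hC.mem_of_hasDirWalk hu hv hut htv fun _ hk =>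
    hle.trans (taxicab_le_of_hasDirWalk hA hk))

theorem DConvex.not_arc_of_arc (hC : DConvex A C) (hA : IsOrientation (gridGraph n m) A)
    (hu : u ∈ C) (ht : t ∉ C) (hv : v ∈ C) (hut : A u t) : ¬ A t v := by
  intro htv
  have hlt := hC.taxicab_lt hA hu hv ht (.of_arc hut) (.of_arc htv)
  have hne : u ≠ v := fun h => hA.2.2 _ _ hut (h ▸ htv)
  have hut' := hA.1 _ _ hut
  have htv' := hA.1 _ _ htv
  simp only [gridGraph_adj, Fin.ext_iff, Prod.ext_iff, ne_eq, taxicab] at *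
  omega

end Taxicab

section Corners

variable {n m : ℕ} {a b c p s v : Fin n × Fin m}

/-- The four vertices of degree two. -/
def IsGridCorner (v : Fin n × Fin m) : Prop :=
  (v.1.val = 0 ∨ v.1.val + 1 = n) ∧ (v.2.val = 0 ∨ v.2.val + 1 = m)

theorem isGridCorner_of_subsingleton_neighborSet_diff (hn : 2 ≤ n) (hm : 2 ≤ m)
    (h : ((gridGraph n m).neighborSet v \ {s}).Subsingleton) : IsGridCorner v := by
  have hthree : ∀ p q r, p ≠ q → p ≠ r → q ≠ r → (gridGraph n m).Adj v p →
      (gridGraph n m).Adj v q → ¬ (gridGraph n m).Adj v r := by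
    intro p q r hpq hpr hqr hp hq hr
    by_cases hps : p = s
    · exact hqr (h ⟨hq, fun hqs => hpq (hps.trans hqs.symm)⟩
        ⟨hr, fun hrs => hpr (hps.trans hrs.symm)⟩)
    · by_cases hqs : q = s
      · exact hpr (h ⟨hp, hps⟩ ⟨hr, fun hrs => hqr (hqs.trans hrs.symm)⟩)
      · exact hpq (h ⟨hp, hps⟩ ⟨hq, hqs⟩)
  obtain ⟨i, hi⟩ := exists_pathGraph_adj hn v.1
  obtain ⟨j, hj⟩ := exists_pathGraph_adj hm v.2
  rw [SimpleGraph.pathGraph_adj] at hi hj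
  by_contra hcorner
  rw [IsGridCorner, not_and_or] at hcorner
  rcases hcorner with hv | hv <;> push Not at hv
  · refine hthree (⟨v.1 - 1, by omega⟩, v.2) (⟨v.1 + 1, by omega⟩, v.2) (v.1, j) ?_ ?_ ?_ ?_ ?_ ?_
    all_goals grind [gridGraph_adj]
  · refine hthree (v.1, ⟨v.2 - 1, by omega⟩) (v.1, ⟨v.2 + 1, by omega⟩) (i, v.2) ?_ ?_ ?_ ?_ ?_ ?_
    all_goals grind [gridGraph_adj]

theorem IsGridCorner.not_adj (hn : 3 ≤ n) (hm : 3 ≤ m) (ha : IsGridCorner a) (hb : IsGridCorner b) :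
    ¬ (gridGraph n m).Adj a b := by
  simp only [IsGridCorner, gridGraph_adj, Fin.ext_iff] at *
  omega

theorem IsGridCorner.eq_of_adj_of_adj (hn : 4 ≤ n) (hm : 4 ≤ m) (hb : IsGridCorner b)
    (hc : IsGridCorner c) (hab : (gridGraph n m).Adj a b) (hac : (gridGraph n m).Adj a c) :
    b = c := by
  simp only [IsGridCorner, gridGraph_adj, Fin.ext_iff, Prod.ext_iff] at *
  omega

/-- `b` is the midpoint of `a` and `p`. -/
def IsGridMidpoint (a b p : Fin n × Fin m) : Prop :=
  a.1.val + p.1 = 2 * b.1 ∧ a.2.val + p.2 = 2 * b.2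

theorem exists_isGridMidpoint (h₁ : a.1.val ≤ 2 * b.1) (h₁' : 2 * b.1 < n + a.1.val)
    (h₂ : a.2.val ≤ 2 * b.2) (h₂' : 2 * b.2 < m + a.2.val) : ∃ p, IsGridMidpoint a b p :=
  ⟨(⟨2 * b.1 - a.1, by omega⟩, ⟨2 * b.2 - a.2, by omega⟩), by grind [IsGridMidpoint]⟩

theorem IsGridMidpoint.adj (h : IsGridMidpoint a b p) (hab : (gridGraph n m).Adj a b) :
    (gridGraph n m).Adj b p := by
  grind [IsGridMidpoint, gridGraph_adj]

theorem IsGridCorner.exists_isGridMidpoint (hn : 3 ≤ n) (hm : 3 ≤ m) (ha : IsGridCorner a)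
    (hab : (gridGraph n m).Adj a b) : ∃ p, IsGridMidpoint a b p := by
  simp only [IsGridCorner, gridGraph_adj, Fin.ext_iff] at ha hab
  apply _root_.exists_isGridMidpoint <;> omega

theorem IsGridCorner.exists_isGridMidpoint_next (hn : 4 ≤ n) (hm : 4 ≤ m) (ha : IsGridCorner a)
    (hab : (gridGraph n m).Adj a b) (hc : IsGridMidpoint a b c) : ∃ q, IsGridMidpoint b c q := by
  simp only [IsGridCorner, IsGridMidpoint, gridGraph_adj, Fin.ext_iff] at ha hab hc
  apply _root_.exists_isGridMidpoint <;> omega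

end Corners

section UniqueEntry

variable {n m : ℕ} {A : Fin n × Fin m → Fin n × Fin m → Prop} {C : Set (Fin n × Fin m)}
  {a b c w x y : Fin n × Fin m}

/-- All arcs of the oriented grid that leave the convex set `C` end at the same vertex `a`. One of
them starts at `y`, and `b` is the next vertex after `a` on some walk. -/
structure IsUniqueEntry (A : Fin n × Fin m → Fin n × Fin m → Prop) (C : Set (Fin n × Fin m))
    (y a b : Fin n × Fin m) : Prop where
  isOrientation : IsOrientation (gridGraph n m) A
  dConvex : DConvex A C
  mem : y ∈ C
  arc_entry : A y a
  entry_notMem : a ∉ C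
  arc_next : A a b
  eq_of_arc : ∀ u ∈ C, ∀ t ∉ C, A u t → t = a

namespace IsUniqueEntry

theorem next_notMem (h : IsUniqueEntry A C y a b) : b ∉ C := fun hb =>
  h.dConvex.not_arc_of_arc h.isOrientation h.mem h.entry_notMem hb h.arc_entry h.arc_next

theorem adj_next (h : IsUniqueEntry A C y a b) : (gridGraph n m).Adj a b :=
  h.isOrientation.1 _ _ h.arc_next

theorem arc_to_entry (h : IsUniqueEntry A C y a b) (hx : x ∈ C)
    (hax : (gridGraph n m).Adj a x) : A x a :=
  (h.isOrientation.2.1 a x hax).resolve_left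
    (h.dConvex.not_arc_of_arc h.isOrientation h.mem h.entry_notMem hx h.arc_entry)

theorem arc_of_ne_entry (h : IsUniqueEntry A C y a b) (hc : c ∉ C) (hca : c ≠ a) (hw : w ∈ C)
    (hcw : (gridGraph n m).Adj c w) : A c w :=
  (h.isOrientation.2.1 c w hcw).resolve_right fun hwc => hca (h.eq_of_arc w hw c hc hwc)

/-- A walk `x → a → b → w` whose inner vertices avoid `C` must be longer than the grid distance
from `x` to `w`, so it makes two turns in the same direction. -/
theorem eq_of_adj_of_adj (h : IsUniqueEntry A C y a b) (hx : x ∈ C)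
    (hax : (gridGraph n m).Adj a x) (hw : w ∈ C) (hbw : (gridGraph n m).Adj b w) :
    w.1.val + a.1 = b.1 + x.1 ∧ w.2.val + a.2 = b.2 + x.2 := by
  have hab := h.adj_next
  have hlt := h.dConvex.taxicab_lt h.isOrientation hx hw h.entry_notMem
    (.of_arc (h.arc_to_entry hx hax)) ((HasDirWalk.of_arc h.arc_next).append
      (.of_arc (h.arc_of_ne_entry h.next_notMem hab.ne' hw hbw)))
  have hxb : x ≠ b := ne_of_mem_of_not_mem hx h.next_notMem
  have haw : w ≠ a := ne_of_mem_of_not_mem hw h.entry_notMem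
  simp only [gridGraph_adj, Fin.ext_iff, Prod.ext_iff, taxicab, ne_eq] at *
  omega

theorem isGridCorner_next (h : IsUniqueEntry A C y a b) (hn : 2 ≤ n) (hm : 2 ≤ m)
    (hout : ∀ w, (gridGraph n m).Adj b w → w ≠ a → w ∈ C) : IsGridCorner b := by
  refine isGridCorner_of_subsingleton_neighborSet_diff (s := a) hn hm ?_
  rintro w ⟨hbw, hwa⟩ w' ⟨hbw', hwa'⟩
  have hay := (h.isOrientation.1 _ _ h.arc_entry).symm
  have hw := h.eq_of_adj_of_adj h.mem hay (hout w hbw hwa) hbw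
  have hw' := h.eq_of_adj_of_adj h.mem hay (hout w' hbw' hwa') hbw'
  ext <;> omega

theorem isGridCorner_entry (h : IsUniqueEntry A C y a b) (hn : 2 ≤ n) (hm : 2 ≤ m)
    (hin : ∀ x, (gridGraph n m).Adj a x → x ≠ b → x ∈ C) (hw : w ∈ C)
    (hbw : (gridGraph n m).Adj b w) : IsGridCorner a := by
  refine isGridCorner_of_subsingleton_neighborSet_diff (s := b) hn hm ?_
  rintro x ⟨hax, hxb⟩ x' ⟨hax', hxb'⟩
  have hx := h.eq_of_adj_of_adj (hin x hax hxb) hax hw hbw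
  have hx' := h.eq_of_adj_of_adj (hin x' hax' hxb') hax' hw hbw
  ext <;> omega

theorem taxicab_lt_four (h : IsUniqueEntry A C y a b) (hbc : A b c) (hc : c ∉ C) (hca : c ≠ a)
    (hx : x ∈ C) (hax : (gridGraph n m).Adj a x) (hw : w ∈ C) (hcw : (gridGraph n m).Adj c w) :
    taxicab x w < 4 :=
  h.dConvex.taxicab_lt h.isOrientation hx hw h.entry_notMem (.of_arc (h.arc_to_entry hx hax))
    (((HasDirWalk.of_arc h.arc_next).append (.of_arc hbc)).append
      (.of_arc (h.arc_of_ne_entry hc hca hw hcw)))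

theorem not_isGridCorner_entry (h : IsUniqueEntry A C y a b) (hn : 4 ≤ n) (hm : 4 ≤ m)
    (hbc : A b c) (hc : c ∉ C) (hca : c ≠ a) (hmem : ∀ d, d ≠ a → d ≠ b → d ≠ c → d ∈ C) :
    ¬ IsGridCorner a := by
  intro hcorner
  have hab := h.adj_next
  have hbc' := h.isOrientation.1 _ _ hbc
  have hay := (h.isOrientation.1 _ _ h.arc_entry).symm
  have hyb : y ≠ b := ne_of_mem_of_not_mem h.mem h.next_notMem
  obtain ⟨p, hp⟩ := hcorner.exists_isGridMidpoint (by omega) (by omega) hab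
  have hbp := hp.adj hab
  by_cases hpc : p = c
  · subst hpc
    obtain ⟨q, hq⟩ := hcorner.exists_isGridMidpoint_next hn hm hab hp
    have hpq := hq.adj hbp
    have hfar : q ≠ a ∧ q ≠ b ∧ 4 ≤ taxicab y q := by
      simp only [gridGraph_adj, Fin.ext_iff, Prod.ext_iff, taxicab, IsGridMidpoint, ne_eq] at *
      omega
    have hqC := hmem q hfar.1 hfar.2.1 hpq.ne'
    exact hfar.2.2.not_gt (h.taxicab_lt_four hbc hc hca h.mem hay hqC hpq)
  · have hpa : p ≠ a := by grind [gridGraph_adj, IsGridMidpoint]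
    have hturn := h.eq_of_adj_of_adj h.mem hay (hmem p hpa hbp.ne' hpc) hbp
    simp only [IsGridMidpoint] at hp
    exact hyb (by ext <;> omega)

theorem not_isGridCorner_next (h : IsUniqueEntry A C y a b) (hn : 3 ≤ n) (hm : 3 ≤ m)
    (hbc : A b c) (hc : c ∉ C) (hca : c ≠ a) (hmem : ∀ d, d ≠ a → d ≠ b → d ≠ c → d ∈ C) :
    ¬ IsGridCorner b := by
  intro hcorner
  have hab := h.adj_next
  have hbc' := h.isOrientation.1 _ _ hbc
  obtain ⟨x, hx⟩ := hcorner.exists_isGridMidpoint hn hm hab.symm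
  obtain ⟨q, hq⟩ := hcorner.exists_isGridMidpoint hn hm hbc'
  have hax := hx.adj hab.symm
  have hcq := hq.adj hbc'
  have hfar : x ≠ b ∧ x ≠ c ∧ q ≠ a ∧ q ≠ b ∧ 4 ≤ taxicab x q := by
    simp only [gridGraph_adj, Fin.ext_iff, Prod.ext_iff, taxicab, IsGridMidpoint, IsGridCorner,
      ne_eq] at *
    omega
  obtain ⟨hxb, hxc, hqa, hqb, hfour⟩ := hfar
  have hxC := hmem x hax.ne' hxb hxc
  have hqC := hmem q hqa hqb hcq.ne'
  exact hfour.not_gt (h.taxicab_lt_four hbc hc hca hxC hax hqC hcq)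

theorem not_forall_mem_of_arc (h : IsUniqueEntry A C y a b) (hn : 4 ≤ n) (hm : 4 ≤ m)
    (hbc : A b c) (hc : c ∉ C) (hca : c ≠ a) :
    ¬ ∀ d, d ≠ a → d ≠ b → d ≠ c → d ∈ C := by
  intro hmem
  have hab := h.adj_next
  have hbc' := h.isOrientation.1 _ _ hbc
  by_cases hw : ∃ w, (gridGraph n m).Adj b w ∧ w ≠ a ∧ w ≠ c
  · obtain ⟨w, hbw, hwa, hwc⟩ := hw
    have hnac : ¬ (gridGraph n m).Adj a c := by grind [gridGraph_adj]
    exact h.not_isGridCorner_entry hn hm hbc hc hca hmem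
      (h.isGridCorner_entry (by omega) (by omega)
        (fun x hax hxb => hmem x hax.ne' hxb fun hxc => hnac (hxc ▸ hax))
        (hmem w hwa hbw.ne' hwc) hbw)
  · push Not at hw
    exact h.not_isGridCorner_next (by omega) (by omega) hbc hc hca hmem
      (isGridCorner_of_subsingleton_neighborSet_diff (s := a) (by omega) (by omega)
        fun w hw' v hv' => (hw w hw'.1 hw'.2).trans (hw v hv'.1 hv'.2).symm)

theorem not_forall_mem_of_arc_entry (h : IsUniqueEntry A C y a b) (hn : 4 ≤ n) (hm : 4 ≤ m)
    (hac : A a c) (hbc : b ≠ c) :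
    ¬ ∀ d, d ≠ a → d ≠ b → d ≠ c → d ∈ C := by
  intro hmem
  have h' : IsUniqueEntry A C y a c := { h with arc_next := hac }
  have hab := h.adj_next
  have hac' := h'.adj_next
  have hnbc : ¬ (gridGraph n m).Adj b c := by grind [gridGraph_adj]
  refine hbc (IsGridCorner.eq_of_adj_of_adj hn hm ?_ ?_ hab hac')
  · exact h.isGridCorner_next (by omega) (by omega) fun w hbw hwa =>
      hmem w hwa hbw.ne' fun hwc => hnbc (hwc ▸ hbw)
  · exact h'.isGridCorner_next (by omega) (by omega) fun w hcw hwa =>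
      hmem w hwa (fun hwb => hnbc (hwb ▸ hcw.symm)) hcw.ne'

theorem exists_notMem_ne_ne (h : IsUniqueEntry A C y a b) (hstr : StrongConnected A)
    (hn : 3 ≤ n) (hm : 3 ≤ m) : ∃ c ∉ C, c ≠ a ∧ c ≠ b := by
  by_contra! hout
  have hmem (d) (hda : d ≠ a) (hdb : d ≠ b) : d ∈ C := by_contra fun hd => hdb (hout d hd hda)
  obtain ⟨x, hx, w, hw, hxw⟩ := hstr.exists_arc_leaving (L := Cᶜ) ⟨a, h.entry_notMem⟩
    (by simpa using h.dConvex.1)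
  rw [Set.notMem_compl_iff] at hw
  have hxa : x ≠ a := fun hxa => h.dConvex.not_arc_of_arc h.isOrientation h.mem h.entry_notMem hw
    h.arc_entry (hxa ▸ hxw)
  obtain rfl : x = b := hout x hx hxa
  have hab := h.adj_next
  refine IsGridCorner.not_adj hn hm ?_ ?_ hab
  · exact h.isGridCorner_entry (by omega) (by omega) (fun x hax hxb => hmem x hax.ne' hxb) hw
      (h.isOrientation.1 _ _ hxw)
  · exact h.isGridCorner_next (by omega) (by omega) fun w hbw hwa => hmem w hwa hbw.ne'

theorem four_le_ncard_compl (h : IsUniqueEntry A C y a b) (hstr : StrongConnected A)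
    (hn : 4 ≤ n) (hm : 4 ≤ m) : 4 ≤ Cᶜ.ncard := by
  by_contra! hlt
  obtain ⟨c, hc, hca, hcb⟩ := h.exists_notMem_ne_ne hstr (by omega) (by omega)
  have hcard := Set.ncard_eq_three.2 ⟨a, b, c, h.adj_next.ne, hca.symm, hcb.symm, rfl⟩
  have hcompl : {a, b, c} = Cᶜ := by
    refine Set.eq_of_subset_of_ncard_le ?_ (by omega)
    rintro _ (rfl | rfl | rfl)
    exacts [h.entry_notMem, h.next_notMem, hc]
  have hmem (d) (hda : d ≠ a) (hdb : d ≠ b) (hdc : d ≠ c) : d ∈ C := by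
    by_contra hd
    simpa [hda, hdb, hdc] using hcompl.ge hd
  obtain ⟨_, rfl, u, huc, harc⟩ := hstr.flip.exists_arc_leaving (Set.singleton_nonempty c)
    ⟨a, hca.symm⟩
  have hu : u ∈ Cᶜ := fun hu => hca (h.eq_of_arc u hu _ hc harc)
  rw [← hcompl] at hu
  rcases hu with rfl | rfl | rfl
  · exact h.not_forall_mem_of_arc_entry hn hm harc hcb.symm hmem
  · exact h.not_forall_mem_of_arc hn hm harc hc hca hmem
  · exact huc rfl

end IsUniqueEntry

/-- The vertices outside `C` at which some arc leaving `C` ends. With `flip A` in place of `A`,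
these are the vertices from which an arc enters `C`. -/
def entries (A : Fin n × Fin m → Fin n × Fin m → Prop) (C : Set (Fin n × Fin m)) :
    Set (Fin n × Fin m) :=
  {t | t ∉ C ∧ ∃ u ∈ C, A u t}

theorem four_le_ncard_compl_of_subsingleton_entries (hA : IsOrientation (gridGraph n m) A)
    (hstr : StrongConnected A) (hC : DConvex A C) (hne : C ≠ Set.univ) (hn : 4 ≤ n) (hm : 4 ≤ m)
    (hentries : (entries A C).Subsingleton) : 4 ≤ Cᶜ.ncard := by
  obtain ⟨y, hy, a, ha, hya⟩ := hstr.exists_arc_leaving hC.1 (Set.nonempty_compl.2 hne)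
  obtain ⟨x, hxa, b, -, hxb⟩ := hstr.exists_arc_leaving (Set.singleton_nonempty a)
    ⟨y, ne_of_mem_of_not_mem hy ha⟩
  have hab : A a b := Set.mem_singleton_iff.1 hxa ▸ hxb
  have hentry (u) (hu : u ∈ C) (t) (ht : t ∉ C) (hut : A u t) : t = a :=
    hentries ⟨ht, u, hu, hut⟩ ⟨ha, y, hy, hya⟩
  exact IsUniqueEntry.four_le_ncard_compl ⟨hA, hC, hy, hya, ha, hab, hentry⟩ hstr hn hm

theorem DConvex.four_le_ncard_compl (hC : DConvex A C) (hA : IsOrientation (gridGraph n m) A)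
    (hstr : StrongConnected A) (hne : C ≠ Set.univ) (hn : 4 ≤ n) (hm : 4 ≤ m) :
    4 ≤ Cᶜ.ncard := by
  rcases Set.subsingleton_or_nontrivial (entries A C) with hsub | hentries
  · exact four_le_ncard_compl_of_subsingleton_entries hA hstr hC hne hn hm hsub
  rcases Set.subsingleton_or_nontrivial (entries (_root_.flip A) C) with hsub | hexits
  · exact four_le_ncard_compl_of_subsingleton_entries hA.flip hstr.flip hC.flip hne hn hm hsub
  have hdisj : Disjoint (entries A C) (entries (_root_.flip A) C) :=
    Set.disjoint_left.2 fun t ⟨ht, u, hu, hut⟩ ⟨_, w, hw, htw⟩ =>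
      hC.not_arc_of_arc hA hu ht hw hut htw
  calc 4 ≤ (entries A C).ncard + (entries (_root_.flip A) C).ncard :=
        Nat.add_le_add (Set.one_lt_ncard_iff_nontrivial.2 hentries)
          (Set.one_lt_ncard_iff_nontrivial.2 hexits)
    _ = (entries A C ∪ entries (_root_.flip A) C).ncard := (Set.ncard_union_eq hdisj).symm
    _ ≤ Cᶜ.ncard := Set.ncard_le_ncard (Set.union_subset (fun t ht => ht.1) fun t ht => ht.1)

theorem DConvex.ncard_eq_one_or_eq_four_or_six_le (hC : DConvex A C)
    (hA : IsOrientation (gridGraph n m) A) (hstr : StrongConnected A) :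
    C.ncard = 1 ∨ C.ncard = 4 ∨ 6 ≤ C.ncard := by
  rcases C.subsingleton_or_nontrivial with hsub | hnt
  · obtain ⟨u, rfl⟩ := hsub.eq_empty_or_singleton.resolve_left hC.1.ne_empty
    exact .inl (Set.ncard_singleton u)
  · exact .inr (ncard_eq_four_or_six_le (gridColoring n m)
      (fun u hu => hC.nontrivial_inter_neighborSet hA hstr hnt hu) hC.1
      fun p q => gridGraph_ncard_commonNeighbors_le_two)

theorem of_mem_strongConvexitySpectrum {k : ℕ} (hn : 4 ≤ n) (hm : 4 ≤ m)
    (hk : k ∈ strongConvexitySpectrum (gridGraph n m)) :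
    (k = 1 ∨ k = 4 ∨ 6 ≤ k) ∧ k + 4 ≤ n * m := by
  obtain ⟨A, hA, hstr, rfl⟩ := hk
  have : Nontrivial (Fin n) := Fin.nontrivial_iff_two_le.2 (by omega)
  have : Nonempty (Fin m) := ⟨⟨0, by omega⟩⟩
  obtain ⟨C, hC, hne, hcard⟩ := exists_dConvex_ncard_eq_convexityNumber A
  rw [← hcard]
  refine ⟨hC.ncard_eq_one_or_eq_four_or_six_le hA hstr, ?_⟩
  calc C.ncard + 4 ≤ C.ncard + Cᶜ.ncard :=
        Nat.add_le_add_left (hC.four_le_ncard_compl hA hstr hne hn hm) _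
    _ = n * m := by
      rw [Set.ncard_add_ncard_compl, Nat.card_prod, Nat.card_fin, Nat.card_fin]

end UniqueEntry

/-- The strong convexity spectrum of the grid `P_n □ P_4`. -/
theorem strongConvexitySpectrum_grid_n4 (n : ℕ) (hn : 4 ≤ n) :
    strongConvexitySpectrum (gridGraph n 4) =
      {k : ℕ | 1 ≤ k ∧ k ≤ 4 * n - 4} \ {2, 3, 5} := by
  ext k
  simp only [Set.mem_sdiff, Set.mem_ofPred_eq, Set.mem_insert_iff, Set.mem_singleton_iff, not_or]
  constructor
  · intro hk
    have hbounds := of_mem_strongConvexitySpectrum hn le_rfl hk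
    omega
  · rintro ⟨⟨hk, hk'⟩, h2, h3, h5⟩
    rcases lt_or_ge k 10 with hlt | hge
    · exact mem_strongConvexitySpectrum_of_lt_ten hn hk hlt h2 h3 h5
    · exact mem_strongConvexitySpectrum_of_ten_le hge hk'
end

section
/- Let D be an oriented graph. If C ⊆ V(D) is a proper convex set of D that is maximal (with respect to inclusion) among proper convex sets of D, then the subdigraph of D induced by V(D) \ C is connected, i.e., its underlying undirected graph is connected. -/
/-!  Common definitions: oriented graphs, geodesic convexity, convexity number,
strong convexity spectrum, and grid graphs. -/

variable {V : Type*}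

/-!
A geodesic that leaves and re-enters the union of `C` with a component `K` of the graph outside `C`
does so through vertices of `C`, because no edge joins `K` to a vertex outside `C ∪ K`. The stretch
in between is a geodesic joining two vertices of `C`, so it stays in `C`. Hence `C ∪ K` is convex,
and by maximality it contains every vertex.
-/

theorem exists_and_not_succ {p : ℕ → Prop} {a b : ℕ} (hab : a ≤ b) (ha : p a) (hb : ¬p b) :
    ∃ j, a ≤ j ∧ j < b ∧ p j ∧ ¬p (j + 1) := by
  by_contra! hstep
  have hall (n : ℕ) (han : a ≤ n) : n ≤ b → p n := by
    induction n, han using Nat.le_induction with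
    | base => exact fun _ ↦ ha
    | succ n han ih => exact fun hnb ↦ hstep n han hnb (ih (by lia))
  exact hb (hall b hab le_rfl)

section Geodesics

variable {A : V → V → Prop} {f g : ℕ → V} {u v w : V} {k l : ℕ}

namespace IsDirWalk

theorem subwalk (hf : IsDirWalk A k f u v) {a b : ℕ} (hab : a ≤ b) (hbk : b ≤ k) :
    IsDirWalk A (b - a) (fun t ↦ f (a + t)) (f a) (f b) :=
  ⟨rfl, congrArg f (Nat.add_sub_cancel' hab), fun i hi ↦ hf.2.2 (a + i) (by lia)⟩

theorem exists_append (hf : IsDirWalk A k f u v) (hg : IsDirWalk A l g v w) :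
    ∃ h, IsDirWalk A (k + l) h u w := by
  obtain ⟨hf0, hfk, hfA⟩ := hf
  obtain ⟨hg0, hgl, hgA⟩ := hg
  refine ⟨fun t ↦ if t ≤ k then f t else g (t - k), by grind, by grind, fun t ht ↦ ?_⟩
  rcases lt_trichotomy t k with htk | rfl | hkt
  · simpa only [htk.le, Nat.succ_le_of_lt htk, if_true] using hfA t htk
  · simpa [hfk, ← hg0] using hgA 0 (by lia)
  · simpa [hkt.not_ge, show ¬t + 1 ≤ k by lia, show t + 1 - k = t - k + 1 by lia]
      using hgA (t - k) (by lia)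

end IsDirWalk

theorem IsGeodesic.subwalk (hf : IsGeodesic A k f u v) {a b : ℕ} (hab : a ≤ b) (hbk : b ≤ k) :
    IsGeodesic A (b - a) (fun t ↦ f (a + t)) (f a) (f b) := by
  obtain ⟨hwalk, hmin⟩ := hf
  refine ⟨hwalk.subwalk hab hbk, fun l g hg ↦ ?_⟩
  have hprefix : IsDirWalk A a (fun t ↦ f (0 + t)) u (f a) :=
    hwalk.1 ▸ hwalk.subwalk (Nat.zero_le a) (hab.trans hbk)
  have hsuffix : IsDirWalk A (k - b) (fun t ↦ f (b + t)) (f b) v :=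
    hwalk.2.1 ▸ hwalk.subwalk hbk le_rfl
  obtain ⟨_, hreplaced⟩ := hprefix.exists_append hg
  obtain ⟨_, hdetour⟩ := hreplaced.exists_append hsuffix
  have hlength : k ≤ a + l + (k - b) := hmin _ _ hdetour
  lia

end Geodesics

theorem DConvex.mem_of_isGeodesic {A : V → V → Prop} {C : Set V} (hC : DConvex A C)
    {k : ℕ} {f : ℕ → V} {u v : V} (hf : IsGeodesic A k f u v) {a i b : ℕ}
    (hai : a ≤ i) (hib : i ≤ b) (hbk : b ≤ k) (ha : f a ∈ C) (hb : f b ∈ C) : f i ∈ C := by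
  have hi := hC.2 _ ha _ hb _ _ (hf.subwalk (hai.trans hib) hbk) (i - a) (by lia)
  rwa [Nat.add_sub_cancel' hai] at hi

theorem DConvex.of_arcs_crossing {A : V → V → Prop} {C S : Set V} (hC : DConvex A C) (hCS : C ⊆ S)
    (hleave : ∀ x ∈ S, ∀ y ∉ S, A x y → x ∈ C) (henter : ∀ x ∉ S, ∀ y ∈ S, A x y → y ∈ C) :
    DConvex A S := by
  refine ⟨hC.1.mono hCS, fun u hu v hv k f hf i hik ↦ ?_⟩
  by_contra hi
  obtain ⟨hf0, hfk, hfA⟩ := hf.1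
  obtain ⟨a, -, hai, haS, haS'⟩ :=
    exists_and_not_succ (p := fun j ↦ f j ∈ S) (Nat.zero_le i) (hf0 ▸ hu) hi
  obtain ⟨b, hib, hbk, hbS, hbS'⟩ :=
    exists_and_not_succ (p := fun j ↦ f j ∉ S) hik hi (not_not_intro (hfk ▸ hv))
  have haC : f a ∈ C := hleave _ haS _ haS' (hfA a (by lia))
  have hbC : f (b + 1) ∈ C := henter _ hbS _ (not_not.1 hbS') (hfA b hbk)
  exact hi (hCS (hC.mem_of_isGeodesic hf hai.le (by lia) hbk haC hbC))

theorem DConvex.union_componentCompl {G : SimpleGraph V} {A : V → V → Prop}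
    (hA : ∀ x y, A x y → G.Adj x y) {C : Set V} (hC : DConvex A C) (K : G.ComponentCompl C) :
    DConvex A (C ∪ K) := by
  have hboundary {x y : V} (hx : x ∈ C ∪ (K : Set V)) (hy : y ∉ C ∪ (K : Set V))
      (hxy : G.Adj x y) : x ∈ C :=
    hx.resolve_right fun hxK ↦
      hy (.inr (K.mem_of_adj x y hxK (fun hyC ↦ hy (.inl hyC)) hxy))
  exact hC.of_arcs_crossing Set.subset_union_left
    (fun x hx y hy hxy ↦ hboundary hx hy (hA x y hxy))
    (fun x hx y hy hxy ↦ hboundary hy hx (hA x y hxy).symm)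

theorem union_componentCompl_eq_univ {G : SimpleGraph V} {A : V → V → Prop}
    (hA : ∀ x y, A x y → G.Adj x y) {C : Set V}
    (hC : Maximal (fun S ↦ DConvex A S ∧ S ≠ Set.univ) C) (K : G.ComponentCompl C) :
    C ∪ K = Set.univ := by
  by_contra hne
  obtain ⟨x, hxK⟩ := K.nonempty
  have hle : C ∪ K ⊆ C :=
    hC.le_of_ge ⟨hC.prop.1.union_componentCompl hA K, hne⟩ Set.subset_union_left
  exact K.notMem_of_mem hxK (hle (.inr hxK))

theorem complement_of_maximal_convex_connected_general {G : SimpleGraph V} {A : V → V → Prop}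
    (hA : ∀ x y, A x y → G.Adj x y) {C : Set V}
    (hC : Maximal (fun S ↦ DConvex A S ∧ S ≠ Set.univ) C) :
    (G.induce Cᶜ).Connected := by
  obtain ⟨x, hx⟩ := (Set.ne_univ_iff_exists_notMem C).1 hC.prop.2
  refine (SimpleGraph.connected_iff_exists_forall_reachable _).2 ⟨⟨x, hx⟩, fun ⟨y, hy⟩ ↦ ?_⟩
  have hyU : y ∈ C ∪ G.componentComplMk hx := union_componentCompl_eq_univ hA hC _ ▸ Set.mem_univ y
  obtain ⟨_, hyx⟩ := hyU.resolve_left hy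
  exact (SimpleGraph.ConnectedComponent.exact hyx).symm

/-- If `C` is a maximal proper convex set of an oriented graph, then the subdigraph
induced by the complement of `C` has a connected underlying graph. -/
theorem complement_of_maximal_convex_connected {V : Type*} [Fintype V]
    (G : SimpleGraph V) (A : V → V → Prop) (hor : IsOrientation G A)
    (C : Set V) (hC : DConvex A C) (hproper : C ≠ Set.univ)
    (hmax : ∀ C' : Set V, DConvex A C' → C' ≠ Set.univ → C ⊆ C' → C' = C) :
    (G.induce (Cᶜ : Set V)).Connected :=
  complement_of_maximal_convex_connected_general hor.1
    ⟨⟨hC, hproper⟩, fun S hS hCS ↦ (hmax S hS.1 hS.2 hCS).le⟩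
end

section
/- Let G be a finite triangle-free simple graph, let D be an orientation of G, let C be a convex set of D, and let x ∈ V(D) \ C be adjacent in G to some vertex y ∈ C. If the arc between x and y is oriented from x to y, then for every neighbor z of x in G with z ∈ C, the arc between x and z is oriented from x to z. If the arc between x and y is oriented from y to x, then for every neighbor z of x in G with z ∈ C, the arc between x and z is oriented from z to x. -/
/-!  Common definitions: oriented graphs, geodesic convexity, convexity number,
strong convexity spectrum, and grid graphs. -/

variable {V : Type*}

/-!
If `a → x → b` with `a, b ∈ C` and `x ∉ C`, then this path cannot be a geodesic, so either `a = b`,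
which would orient the edge `ax` both ways, or `a → b`, which would close a triangle `a x b`.
-/

section

variable {A : V → V → Prop} {f : ℕ → V} {u v w : V}

theorem IsDirWalk.eq_of_length_zero (h : IsDirWalk A 0 f u v) : u = v :=
  h.1.symm.trans h.2.1

theorem IsDirWalk.arc_of_length_one (h : IsDirWalk A 1 f u v) : A u v := by
  obtain ⟨rfl, rfl, harc⟩ := h
  exact harc 0 one_pos

theorem IsDirWalk.two_le_length {k : ℕ} (h : IsDirWalk A k f u v) (hne : u ≠ v) (huv : ¬A u v) :
    2 ≤ k := by
  match k with
  | 0 => exact absurd h.eq_of_length_zero hne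
  | 1 => exact absurd h.arc_of_length_one huv
  | k + 2 => exact Nat.le_add_left 2 k

/-- The vertex sequence `u, w, v` of a two-arc directed walk, in the encoding of `IsDirWalk`;
it stays constant at `v` beyond index `2`. -/
def twoArcWalk (u w v : V) : ℕ → V
  | 0 => u
  | 1 => w
  | _ => v

theorem isDirWalk_twoArcWalk (huw : A u w) (hwv : A w v) :
    IsDirWalk A 2 (twoArcWalk u w v) u v := by
  refine ⟨rfl, rfl, fun i hi ↦ ?_⟩
  interval_cases i
  · exact huw
  · exact hwv

theorem isGeodesic_twoArcWalk (huw : A u w) (hwv : A w v) (hne : u ≠ v) (huv : ¬A u v) :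
    IsGeodesic A 2 (twoArcWalk u w v) u v :=
  ⟨isDirWalk_twoArcWalk huw hwv, fun _ _ h ↦ h.two_le_length hne huv⟩

theorem DConvex.mem_of_arc_of_arc {C : Set V} (hC : DConvex A C) (hu : u ∈ C) (hv : v ∈ C)
    (huw : A u w) (hwv : A w v) (hne : u ≠ v) (huv : ¬A u v) : w ∈ C :=
  hC.2 u hu v hv 2 _ (isGeodesic_twoArcWalk huw hwv hne huv) 1 one_le_two

theorem DConvex.not_arc_of_arc_s8 {G : SimpleGraph V} {C : Set V} (hC : DConvex A C)
    (hor : IsOrientation G A) (hind : G.IsIndepSet (G.neighborSet w ∩ C)) (hw : w ∉ C)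
    (hu : u ∈ C) (hv : v ∈ C) (huw : A u w) : ¬A w v := by
  obtain ⟨adj_of_arc, -, not_arc_symm⟩ := hor
  intro hwv
  have hne : u ≠ v := by
    rintro rfl
    exact not_arc_symm _ _ huw hwv
  have huv : ¬A u v := fun h ↦
    hind ⟨(adj_of_arc _ _ huw).symm, hu⟩ ⟨adj_of_arc _ _ hwv, hv⟩ hne (adj_of_arc _ _ h)
  exact hw (hC.mem_of_arc_of_arc hu hv huw hwv hne huv)

end

theorem arcs_to_convex_set_same_direction_general {V : Type*} {G : SimpleGraph V}
    {A : V → V → Prop} (hor : IsOrientation G A) {C : Set V} (hC : DConvex A C) {x : V}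
    (hind : G.IsIndepSet (G.neighborSet x ∩ C)) (hx : x ∉ C) {y : V} (hy : y ∈ C) :
    (A x y → ∀ z : V, G.Adj x z → z ∈ C → A x z) ∧
    (A y x → ∀ z : V, G.Adj x z → z ∈ C → A z x) where
  left hxy z hxz hz :=
    (hor.2.1 x z hxz).resolve_right fun hzx ↦ hC.not_arc_of_arc_s8 hor hind hx hz hy hzx hxy
  right hyx z hxz hz :=
    (hor.2.1 x z hxz).resolve_left (hC.not_arc_of_arc_s8 hor hind hx hy hz hyx)

/-- In an orientation of a triangle-free graph, a vertex `x` outside a convex set `C`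
adjacent to a vertex of `C` has all its arcs towards `C` pointing the same way. -/
theorem arcs_to_convex_set_same_direction {V : Type*} [Fintype V]
    (G : SimpleGraph V) (htf : G.CliqueFree 3)
    (A : V → V → Prop) (hor : IsOrientation G A)
    (C : Set V) (hC : DConvex A C)
    (x : V) (hx : x ∉ C) (y : V) (hy : y ∈ C) (hadj : G.Adj x y) :
    (A x y → ∀ z : V, G.Adj x z → z ∈ C → A x z) ∧
    (A y x → ∀ z : V, G.Adj x z → z ∈ C → A z x) := by
  have hind : G.IsIndepSet (G.neighborSet x ∩ C) :=
    (G.isIndepSet_neighborSet_of_triangleFree htf x).mono Set.inter_subset_left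
  exact arcs_to_convex_set_same_direction_general hor hC hind hx hy
end
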